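/- Let μ ∈ M(0,1). Then for every fixed integer ν ≥ 0, Q_{n+1}^{(ν)}(z)/Q_n^{(ν)}(z) → φ(z)/2 uniformly on every compact subset of ℂ∖S_μ, and (1/n)·Q_n^{(ν+1)}(z)/Q_n^{(ν)}(z) → 1/√(z²−1) uniformly on every compact subset of ℂ̄∖S_μ. -/

import Mathlib

open MeasureTheory Polynomial Filter Topology Set
open scoped Classical

/-- The branch of `√(z²-1)` on `ℂ ∖ [-1,1]` that is positive for `z > 1`. -/
noncomputable def sqrtB (z : ℂ) : ℂ := z * (1 - 1 / z ^ 2) ^ ((1 : ℂ) / 2)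

/-- `φ(z) = z + √(z²-1)`, the conformal map of `ℂ ∖ [-1,1]` onto the exterior
of the closed unit disk. -/
noncomputable def phi (z : ℂ) : ℂ := z + sqrtB z

/-- The support of a measure on `ℝ`: points all of whose neighborhoods have
positive measure. -/
def msupp (μ : Measure ℝ) : Set ℝ := {x | ∀ U ∈ nhds x, μ U ≠ 0}

/-- The support `S_μ`, viewed as a subset of `ℂ`. -/
def msuppC (μ : Measure ℝ) : Set ℂ := Complex.ofReal '' msupp μ

/-- `l` is the sequence of orthonormal polynomials of the measure `μ`:
degree `n`, positive leading coefficient, `∫ l_m l_n dμ = δ_{mn}`. -/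
structure IsOrthonormalPolys (μ : Measure ℝ) (l : ℕ → Polynomial ℝ) : Prop where
  natDegree_eq : ∀ n, (l n).natDegree = n
  leadingCoeff_pos : ∀ n, 0 < (l n).leadingCoeff
  orthonormal : ∀ m n, ∫ x, (l m).eval x * (l n).eval x ∂μ = if m = n then 1 else 0

/-- `μ ∈ M(0,1)`: the recurrence coefficients of the orthonormal polynomials
`l_n` satisfy `a_n → 1/2`, `b_n → 0`, where
`x·l_n = a_{n+1} l_{n+1} + b_n l_n + a_n l_{n-1}`. -/
structure IsM01 (μ : Measure ℝ) (l : ℕ → Polynomial ℝ) (a b : ℕ → ℝ) : Prop where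
  onp : IsOrthonormalPolys μ l
  recurrence_zero : X * l 0 = a 1 • l 1 + b 0 • l 0
  recurrence : ∀ n : ℕ,
    X * l (n + 1) = a (n + 2) • l (n + 2) + b (n + 1) • l (n + 1) + a (n + 1) • l n
  tendsto_a : Tendsto a atTop (nhds (1 / 2))
  tendsto_b : Tendsto b atTop (nhds 0)

/-- The rational function `r = S/T` with
`S(z) = ∏ (z-c_i)^{A_i}`, `T(z) = ∏ (z-d_j)^{B_j}`, evaluated on the real line. -/
noncomputable def ratFn {h ℓ : ℕ} (c : Fin h → ℂ) (d : Fin ℓ → ℂ)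
    (A : Fin h → ℕ) (B : Fin ℓ → ℕ) (x : ℝ) : ℂ :=
  (∏ i, ((x : ℂ) - c i) ^ (A i)) / ∏ j, ((x : ℂ) - d j) ^ (B j)

/-- `Q` is the monic polynomial of least degree, not identically zero, with
`∫ p(x) Q(x) r(x) dμ(x) = 0` for every polynomial `p` of degree `≤ n-1`. -/
def IsQPoly (μ : Measure ℝ) (r : ℝ → ℂ) (n : ℕ) (Q : Polynomial ℂ) : Prop :=
  Q.Monic ∧
  (∀ p : Polynomial ℂ, p.degree < n →
    ∫ x, p.eval (x : ℂ) * Q.eval (x : ℂ) * r x ∂μ = 0) ∧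
  (∀ q : Polynomial ℂ, q ≠ 0 →
    (∀ p : Polynomial ℂ, p.degree < n →
      ∫ x, p.eval (x : ℂ) * q.eval (x : ℂ) * r x ∂μ = 0) →
    Q.degree ≤ q.degree)

/-!
The polynomials `Q n` are reached from the orthogonal polynomials of `μ` by building up `r` one
linear factor at a time. Multiplying the weight by `x - c` turns monic orthogonal polynomials `P n`
into `(P (n + 1) - κ n • P n) / (z - c)` with `κ n = P (n + 1) c / P n c`; dividing it by `x - d`
turns them into `P n - κ n • P (n - 1)`, where `κ n` is now a ratio of functions of the second kind
at `d`. Both steps preserve the limits `φ / 2` and `1 / (2φ)` of the ratios of consecutive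
polynomials and of consecutive functions of the second kind: since `φ` is injective, `κ n` does not
have the same limit as the ratio at a point `z ≠ c`, and at `z = c` itself the derivative of the
limit takes over.

For the weight `1`, the ratios are read off the Green function of the Jacobi matrix near the
diagonal. Any limit of its entries along an ultrafilter is a square-summable solution of the
recurrence of the free Jacobi matrix with a unit source at `0`, hence equals
`φ ^ (-|j|) / √(z² - 1)`.

A ratio limit `g` for `F n` gives `F n' / (n F n) → g' / g` by averaging, so that the ratio limit
passes from `F n` to `F n'`; near infinity, the zeros of the derivatives are controlled by the
Gauss–Lucas theorem.
-/

/-! ### Continuous convergence -/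

section ContinuousConvergence

variable {ι X Y : Type*} [TopologicalSpace X]

/-- Continuous convergence of `F` to `f` on `s` along `p`: `F i y → f x` as `i → p` and `y → x`
within `s` independently, for each `x ∈ s`. For continuous limits this is locally uniform
convergence, but stated so that the pointwise limit calculus applies verbatim. -/
def TendstoContinuouslyOn [TopologicalSpace Y] (F : ι → X → Y) (f : X → Y) (p : Filter ι)
    (s : Set X) : Prop :=
  ∀ x ∈ s, Tendsto (fun q : ι × X => F q.1 q.2) (p ×ˢ 𝓝[s] x) (𝓝 (f x))

namespace TendstoContinuouslyOn

section Basic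

variable [TopologicalSpace Y] {F G : ι → X → Y} {f g : X → Y} {p : Filter ι} {s t : Set X}

theorem mono (hF : TendstoContinuouslyOn F f p s) (hts : t ⊆ s) :
    TendstoContinuouslyOn F f p t :=
  fun x hx => (hF x (hts hx)).mono_left (Filter.prod_mono le_rfl (nhdsWithin_mono x hts))

theorem congr' (hF : TendstoContinuouslyOn F f p s)
    (hFG : ∀ x ∈ s, ∀ᶠ q : ι × X in p ×ˢ 𝓝[s] x, F q.1 q.2 = G q.1 q.2) :
    TendstoContinuouslyOn G f p s :=
  fun x hx => (hF x hx).congr' (hFG x hx)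

theorem congr_limit (hF : TendstoContinuouslyOn F f p s) (hfg : EqOn f g s) :
    TendstoContinuouslyOn F g p s :=
  fun x hx => hfg hx ▸ hF x hx

theorem tendsto_at (hF : TendstoContinuouslyOn F f p s) {x : X} (hx : x ∈ s) :
    Tendsto (fun i => F i x) p (𝓝 (f x)) :=
  (hF x hx).comp (tendsto_id.prodMk (tendsto_const_nhdsWithin hx))

theorem comp_tendsto {κ : Type*} {q : Filter κ} {φ : κ → ι} (hF : TendstoContinuouslyOn F f p s)
    (hφ : Tendsto φ q p) : TendstoContinuouslyOn (fun k => F (φ k)) f q s :=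
  fun x hx => (hF x hx).comp (hφ.prodMap tendsto_id)

theorem eventually_ne [T1Space Y] (hF : TendstoContinuouslyOn F f p s) {x : X} (hx : x ∈ s)
    {y : Y} (hy : f x ≠ y) : ∀ᶠ q : ι × X in p ×ˢ 𝓝[s] x, F q.1 q.2 ≠ y :=
  (hF x hx).eventually_ne hy

protected theorem continuousOn [RegularSpace Y] [p.NeBot] (hF : TendstoContinuouslyOn F f p s) :
    ContinuousOn f s := by
  intro x hx
  rw [ContinuousWithinAt, (closed_nhds_basis (f x)).tendsto_right_iff]
  rintro V ⟨hV, hVclosed⟩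
  obtain ⟨P, hP, R, hR, hPR⟩ := eventually_prod_iff.1 ((hF x hx).eventually hV)
  filter_upwards [hR, self_mem_nhdsWithin] with y hy hys
  exact hVclosed.mem_of_tendsto (hF.tendsto_at hys) (hP.mono fun i hi => hPR hi hy)

end Basic

theorem of_tendsto [TopologicalSpace Y] {u : ι → Y} {y : Y} {p : Filter ι} (hu : Tendsto u p (𝓝 y))
    (s : Set X) : TendstoContinuouslyOn (fun i (_ : X) => u i) (fun _ => y) p s :=
  fun _ _ => hu.comp tendsto_fst

section Uniform

variable [UniformSpace Y] {F : ι → X → Y} {f : X → Y} {p : Filter ι} {s : Set X}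

theorem _root_.tendstoContinuouslyOn_iff_tendstoLocallyUniformlyOn (hf : ContinuousOn f s) :
    TendstoContinuouslyOn F f p s ↔ TendstoLocallyUniformlyOn F f p s := by
  rw [tendstoLocallyUniformlyOn_iff_forall_tendsto]
  refine forall₂_congr fun x hx => ?_
  have hfx : Tendsto (fun q : ι × X => f q.2) (p ×ˢ 𝓝[s] x) (𝓝 (f x)) :=
    (hf x hx).tendsto.comp tendsto_snd
  refine ⟨fun h => (hfx.prodMk_nhds h).mono_right (nhds_le_uniformity (f x)), fun h => ?_⟩
  exact hfx.congr_uniformity h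

protected theorem tendstoLocallyUniformlyOn [p.NeBot] (hF : TendstoContinuouslyOn F f p s) :
    TendstoLocallyUniformlyOn F f p s :=
  (tendstoContinuouslyOn_iff_tendstoLocallyUniformlyOn hF.continuousOn).1 hF

theorem tendstoUniformlyOn_of_isCompact [p.NeBot] {K : Set X} (hF : TendstoContinuouslyOn F f p s)
    (hK : IsCompact K) (hKs : K ⊆ s) : TendstoUniformlyOn F f p K :=
  (tendstoLocallyUniformlyOn_iff_tendstoUniformlyOn_of_compact hK).1
    (hF.mono hKs).tendstoLocallyUniformlyOn

end Uniform

section Field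

variable {𝕜 : Type*} [NormedField 𝕜] {F G : ι → X → 𝕜} {f g : X → 𝕜} {p : Filter ι} {s : Set X}

theorem sub (hF : TendstoContinuouslyOn F f p s) (hG : TendstoContinuouslyOn G g p s) :
    TendstoContinuouslyOn (fun i x => F i x - G i x) (fun x => f x - g x) p s :=
  fun x hx => (hF x hx).sub (hG x hx)

theorem mul (hF : TendstoContinuouslyOn F f p s) (hG : TendstoContinuouslyOn G g p s) :
    TendstoContinuouslyOn (fun i x => F i x * G i x) (fun x => f x * g x) p s :=
  fun x hx => (hF x hx).mul (hG x hx)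

theorem div (hF : TendstoContinuouslyOn F f p s) (hG : TendstoContinuouslyOn G g p s)
    (hg : ∀ x ∈ s, g x ≠ 0) :
    TendstoContinuouslyOn (fun i x => F i x / G i x) (fun x => f x / g x) p s :=
  fun x hx => (hF x hx).div (hG x hx) (hg x hx)

end Field

end TendstoContinuouslyOn

theorem TendstoContinuouslyOn.tendstoUniformlyOn_of_isClosed {E Z : Type*} [PseudoMetricSpace E]
    [ProperSpace E] [UniformSpace Z] {F : ι → E → Z} {f : E → Z} {p : Filter ι} [p.NeBot]
    {s K : Set E} {z : Z} (hF : TendstoContinuouslyOn F f p s)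
    (hF_infty : Tendsto (fun q : ι × E => F q.1 q.2) (p ×ˢ Bornology.cobounded E) (𝓝 z))
    (hf_infty : Tendsto f (Bornology.cobounded E) (𝓝 z)) (hK : IsClosed K) (hKs : K ⊆ s) :
    TendstoUniformlyOn F f p K := by
  intro V hV
  have h_infty : ∀ᶠ q : ι × E in p ×ˢ Bornology.cobounded E, (f q.2, F q.1 q.2) ∈ V :=
    ((hf_infty.comp tendsto_snd).prodMk_nhds hF_infty).eventually
      (nhds_le_uniformity z hV)
  obtain ⟨P, hP, R, hR, hPR⟩ := eventually_prod_iff.1 h_infty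
  have hcompact : IsCompact (K ∩ closure {x | ¬ R x}) := by
    have hbdd : Bornology.IsBounded {x | ¬ R x} := by
      rwa [Filter.Eventually, ← Bornology.isCobounded_def, ← Bornology.isBounded_compl_iff] at hR
    exact hbdd.isCompact_closure.inter_left hK
  filter_upwards [hP, hF.tendstoUniformlyOn_of_isCompact hcompact
    (inter_subset_left.trans hKs) V hV] with i hPi hi x hx
  by_cases hRx : R x
  · exact hPR hPi hRx
  · exact hi x ⟨hx, subset_closure hRx⟩

theorem exists_ball_eventually_of_eventually_prod_nhds {E : Type*} [PseudoMetricSpace E]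
    {p : Filter ι} {x : E} {P : ι → E → Prop} (hP : ∀ᶠ q : ι × E in p ×ˢ 𝓝 x, P q.1 q.2) :
    ∃ ρ > 0, ∀ᶠ i in p, ∀ y ∈ Metric.ball x ρ, P i y := by
  obtain ⟨Q, hQ, R, hR, hQR⟩ := eventually_prod_iff.1 hP
  obtain ⟨ρ, hρ, hball⟩ := Metric.eventually_nhds_iff_ball.1 hR
  exact ⟨ρ, hρ, hQ.mono fun i hi y hy => hQR hi (hball y hy)⟩

end ContinuousConvergence

/-! ### Ratio limits of function sequences -/

section RatioLimits

variable {𝕜 X : Type*} [NormedField 𝕜]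

theorem tendsto_mul_cobounded_of_tendsto_ne_zero {α : Type*} {l : Filter α} {f g : α → 𝕜} {a : 𝕜}
    (hf : Tendsto f l (Bornology.cobounded 𝕜)) (hg : Tendsto g l (𝓝 a)) (ha : a ≠ 0) :
    Tendsto (fun x => f x * g x) l (Bornology.cobounded 𝕜) := by
  rw [← tendsto_norm_atTop_iff_cobounded] at hf ⊢
  simpa only [norm_mul] using hf.atTop_mul_pos (norm_pos_iff.2 ha) hg.norm

theorem tendsto_sub_cobounded_of_tendsto {α : Type*} {l : Filter α} {f g : α → 𝕜} {a : 𝕜}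
    (hf : Tendsto f l (Bornology.cobounded 𝕜)) (hg : Tendsto g l (𝓝 a)) :
    Tendsto (fun x => f x - g x) l (Bornology.cobounded 𝕜) := by
  rw [← tendsto_norm_atTop_iff_cobounded] at hf ⊢
  refine tendsto_atTop_mono (fun x => norm_sub_norm_le (f x) (g x)) ?_
  simpa only [sub_eq_add_neg] using hf.atTop_add hg.norm.neg

theorem tendsto_ratio_cobounded_of_eq_sub_mul {A B : ℕ → X → 𝕜} {κ : ℕ → 𝕜} {k : 𝕜} {l : Filter X}
    (hA : Tendsto (fun q : ℕ × X => A (q.1 + 1) q.2 / A q.1 q.2) (atTop ×ˢ l)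
      (Bornology.cobounded 𝕜))
    (hκ : Tendsto κ atTop (𝓝 k)) (hB : ∀ᶠ n in atTop, ∀ x, B n x = A (n + 1) x - κ n * A n x) :
    Tendsto (fun q : ℕ × X => B (q.1 + 1) q.2 / B q.1 q.2) (atTop ×ˢ l)
      (Bornology.cobounded 𝕜) := by
  let R : ℕ × X → 𝕜 := fun q => A (q.1 + 1) q.2 / A q.1 q.2
  have hsucc : Tendsto (fun q : ℕ × X => (q.1 + 1, q.2)) (atTop ×ˢ l) (atTop ×ˢ l) :=
    (tendsto_add_atTop_nat 1).prodMap tendsto_id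
  have hκ' : Tendsto (fun q : ℕ × X => κ q.1) (atTop ×ˢ l) (𝓝 k) := hκ.comp tendsto_fst
  have hnum : Tendsto (fun q : ℕ × X => R (q.1 + 1, q.2) - κ (q.1 + 1)) (atTop ×ˢ l)
      (Bornology.cobounded 𝕜) :=
    tendsto_sub_cobounded_of_tendsto (hA.comp hsucc) (hκ'.comp hsucc)
  have hfactor : Tendsto (fun q : ℕ × X => (1 - κ q.1 * (R q)⁻¹)⁻¹) (atTop ×ˢ l) (𝓝 1) := by
    simpa [R] using (tendsto_const_nhds.sub (hκ'.mul (tendsto_inv₀_cobounded.comp hA))).inv₀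
      (by simp : (1 : 𝕜) - k * 0 ≠ 0)
  refine (tendsto_mul_cobounded_of_tendsto_ne_zero hnum hfactor one_ne_zero).congr' ?_
  filter_upwards [hA.eventually_ne_cobounded 0, tendsto_fst.eventually hB,
    (tendsto_fst.comp hsucc).eventually hB, hfactor.eventually_ne one_ne_zero]
    with ⟨n, x⟩ hR hBn hBn' hne
  obtain ⟨hA1, hA0⟩ := div_ne_zero_iff.1 hR
  simp only [Function.comp_apply] at hBn hBn' hA0 hA1
  have hBn0 : A (n + 1) x - κ n * A n x ≠ 0 := by
    intro h0
    refine hne (inv_eq_zero.2 ?_)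
    rw [inv_div, ← mul_div_assoc, ← sub_eq_zero.1 h0, div_self hA1, sub_self]
  simp only [R, hBn, hBn', inv_div]
  field_simp

variable [TopologicalSpace X] {s : Set X}

theorem TendstoContinuouslyOn.eventually_denom_ne_zero {ι : Type*} {p : Filter ι}
    {A B : ι → X → 𝕜} {g : X → 𝕜} (h : TendstoContinuouslyOn (fun i x => A i x / B i x) g p s)
    (hg : ∀ x ∈ s, g x ≠ 0) {x : X} (hx : x ∈ s) :
    ∀ᶠ q : ι × X in p ×ˢ 𝓝[s] x, B q.1 q.2 ≠ 0 :=
  (h.eventually_ne hx (hg x hx)).mono fun _ hq => (div_ne_zero_iff.1 hq).2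

theorem TendstoContinuouslyOn.ratio_of_div {A B : ℕ → X → 𝕜} {f g : X → 𝕜}
    (hA : TendstoContinuouslyOn (fun n x => A (n + 1) x / A n x) g atTop s)
    (hg : ∀ x ∈ s, g x ≠ 0)
    (hBA : TendstoContinuouslyOn (fun n x => B n x / A n x) f atTop s)
    (hf : ∀ x ∈ s, f x ≠ 0) :
    TendstoContinuouslyOn (fun n x => B (n + 1) x / B n x) g atTop s := by
  refine ((((hBA.comp_tendsto (tendsto_add_atTop_nat 1)).mul hA).div hBA hf).congr' ?_).congr_limit
    fun x hx => mul_div_cancel_left₀ _ (hf x hx)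
  intro x hx
  filter_upwards [hA.eventually_ne hx (hg x hx)] with q hq
  obtain ⟨hA1, hA0⟩ := div_ne_zero_iff.1 hq
  rw [div_mul_div_cancel₀ hA1, div_div_div_cancel_right₀ hA0]

theorem TendstoContinuouslyOn.ratio_of_eq_sub_mul {A B : ℕ → X → 𝕜} {g : X → 𝕜} {κ : ℕ → 𝕜} {k : 𝕜}
    (hA : TendstoContinuouslyOn (fun n x => A (n + 1) x / A n x) g atTop s)
    (hg : ∀ x ∈ s, g x ≠ 0) (hκ : Tendsto κ atTop (𝓝 k)) (hgk : ∀ x ∈ s, g x ≠ k)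
    (hB : ∀ᶠ n in atTop, ∀ x ∈ s, B n x = A (n + 1) x - κ n * A n x) :
    TendstoContinuouslyOn (fun n x => B (n + 1) x / B n x) g atTop s := by
  refine hA.ratio_of_div hg (f := fun x => g x - k) ?_ fun x hx => sub_ne_zero.2 (hgk x hx)
  refine (hA.sub (.of_tendsto hκ s)).congr' fun x hx => ?_
  filter_upwards [hA.eventually_denom_ne_zero hg hx, tendsto_fst.eventually hB,
    tendsto_snd.eventually self_mem_nhdsWithin] with q hq hBq hqs
  rw [hBq _ hqs, sub_div, mul_div_cancel_right₀ _ hq]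

end RatioLimits

section ComplexRatioLimits

variable {Ω : Set ℂ} {g : ℂ → ℂ} {c : ℂ}

theorem eventually_prod_differentiableAt_div {A B : ℕ → ℂ → ℂ} (hΩ : IsOpen Ω)
    (hA : ∀ n, DifferentiableOn ℂ (A n) Ω) (hB : ∀ n, DifferentiableOn ℂ (B n) Ω) {z : ℂ}
    (hz : z ∈ Ω) (hB0 : ∀ᶠ q : ℕ × ℂ in atTop ×ˢ 𝓝[Ω] z, B q.1 q.2 ≠ 0) :
    ∀ᶠ q : ℕ × ℂ in atTop ×ˢ 𝓝 z, DifferentiableAt ℂ (fun w => A q.1 w / B q.1 w) q.2 := by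
  rw [hΩ.nhdsWithin_eq hz] at hB0
  filter_upwards [hB0, tendsto_snd.eventually (hΩ.mem_nhds hz)] with q hq hqΩ
  exact ((hA q.1).differentiableAt (hΩ.mem_nhds hqΩ)).div
    ((hB q.1).differentiableAt (hΩ.mem_nhds hqΩ)) hq

theorem tendstoUniformlyOn_dslope_ball {ι : Type*} {p : Filter ι} {F : ι → ℂ → ℂ} {ρ : ℝ}
    (hρ : 0 < ρ) (hF : TendstoUniformlyOn F g p (Metric.ball c ρ))
    (hFd : ∀ᶠ i in p, DifferentiableOn ℂ (F i) (Metric.ball c ρ))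
    (hgd : DifferentiableOn ℂ g (Metric.ball c ρ)) :
    TendstoUniformlyOn (fun i => dslope (F i) c) (dslope g c) p (Metric.ball c ρ) := by
  have hc := Metric.mem_ball_self (x := c) hρ
  rw [Metric.tendstoUniformlyOn_iff] at hF ⊢
  intro ε hε
  filter_upwards [hF (ε * ρ / 4) (by positivity), hFd] with i hi hdi z hz
  have hsub : dslope g c z - dslope (F i) c z = dslope (fun w => g w - F i w) c z := by
    rcases eq_or_ne z c with rfl | hzc
    · rw [dslope_same, dslope_same, dslope_same, deriv_fun_sub]
      exacts [hgd.differentiableAt (Metric.isOpen_ball.mem_nhds hc),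
        hdi.differentiableAt (Metric.isOpen_ball.mem_nhds hc)]
    · simp only [dslope_of_ne _ hzc, slope_def_field]
      ring
  have hmaps : MapsTo (fun w => g w - F i w) (Metric.ball c ρ)
      (Metric.closedBall (g c - F i c) (ε * ρ / 2)) := by
    intro w hw
    have hw' := hi w hw
    have hc' := hi c hc
    rw [dist_eq_norm] at hw' hc'
    rw [Metric.mem_closedBall, dist_eq_norm]
    linarith [norm_sub_le (g w - F i w) (g c - F i c)]
  rw [dist_eq_norm, hsub]
  calc ‖dslope (fun w => g w - F i w) c z‖ ≤ ε * ρ / 2 / ρ :=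
        Complex.norm_dslope_le_div_of_mapsTo_ball (hgd.fun_sub hdi) hmaps hz
    _ < ε := by field_simp; norm_num

theorem TendstoContinuouslyOn.dslope {ι : Type*} {p : Filter ι} [p.NeBot] {F : ι → ℂ → ℂ}
    (hF : TendstoContinuouslyOn F g p Ω) (hΩ : IsOpen Ω) (hc : c ∈ Ω)
    (hFd : ∀ᶠ q : ι × ℂ in p ×ˢ 𝓝 c, DifferentiableAt ℂ (F q.1) q.2) :
    TendstoContinuouslyOn (fun i => dslope (F i) c) (dslope g c) p Ω := by
  intro z hz
  rcases eq_or_ne z c with rfl | hzc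
  · obtain ⟨ρ₁, hρ₁, hd⟩ := exists_ball_eventually_of_eventually_prod_nhds
      (P := fun i w => DifferentiableAt ℂ (F i) w) hFd
    obtain ⟨ρ₂, hρ₂, hρΩ⟩ := Metric.nhds_basis_closedBall.mem_iff.1 (hΩ.mem_nhds hz)
    have hρ : 0 < min ρ₁ ρ₂ := lt_min hρ₁ hρ₂
    have hdiff : ∀ᶠ i in p, DifferentiableOn ℂ (F i) (Metric.ball z (min ρ₁ ρ₂)) :=
      hd.mono fun i hi w hw =>
        (hi w (Metric.ball_subset_ball (min_le_left _ _) hw)).differentiableWithinAt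
    have hunif : TendstoUniformlyOn F g p (Metric.ball z (min ρ₁ ρ₂)) :=
      (hF.tendstoUniformlyOn_of_isCompact (isCompact_closedBall z ρ₂) hρΩ).mono
        (Metric.ball_subset_closedBall.trans
          (Metric.closedBall_subset_closedBall (min_le_right _ _)))
    have hgd : DifferentiableOn ℂ g (Metric.ball z (min ρ₁ ρ₂)) :=
      hunif.tendstoLocallyUniformlyOn.differentiableOn hdiff Metric.isOpen_ball
    have hcont := ((Complex.differentiableOn_dslope (Metric.ball_mem_nhds z hρ)).2 hgd).continuousOn
    have hlim := (tendstoContinuouslyOn_iff_tendstoLocallyUniformlyOn hcont).2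
      (tendstoUniformlyOn_dslope_ball hρ hunif hdiff hgd).tendstoLocallyUniformlyOn
    have := hlim z (Metric.mem_ball_self hρ)
    rwa [Metric.isOpen_ball.nhdsWithin_eq (Metric.mem_ball_self hρ),
      ← hΩ.nhdsWithin_eq hz] at this
  · have hslope : Tendsto (fun q : ι × ℂ => (F q.1 q.2 - F q.1 c) / (q.2 - c)) (p ×ˢ 𝓝[Ω] z)
        (𝓝 (_root_.dslope g c z)) := by
      rw [dslope_of_ne _ hzc, slope_def_field]
      exact ((hF z hz).sub ((hF.tendsto_at hc).comp tendsto_fst)).div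
        ((tendsto_snd.mono_right nhdsWithin_le_nhds).sub tendsto_const_nhds) (sub_ne_zero.2 hzc)
    refine hslope.congr' ?_
    filter_upwards [(tendsto_snd.mono_right nhdsWithin_le_nhds).eventually_ne hzc] with q hq
    rw [dslope_of_ne _ hq, slope_def_field]

theorem dslope_div_eq_of_sub_mul_eq {A A' B : ℂ → ℂ} {κ : ℂ} (hAc : A c ≠ 0)
    (hA : DifferentiableAt ℂ A c) (hB : DifferentiableAt ℂ B c)
    (hBA : ∀ᶠ z in 𝓝 c, (z - c) * B z = A' z - κ * A z) :
    ∀ z, A z ≠ 0 → (z - c) * B z = A' z - κ * A z →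
      dslope (fun w => A' w / A w) c z = B z / A z := by
  intro z hAz hz
  have hκ : A' c / A c = κ := by
    have := hBA.self_of_nhds
    rw [sub_self, zero_mul, eq_comm, sub_eq_zero] at this
    rw [this, mul_div_cancel_right₀ _ hAc]
  rcases eq_or_ne z c with rfl | hzc
  · have hderiv : HasDerivAt (fun w => (w - z) * (B w / A w) + κ) (B z / A z) z := by
      simpa using (((hasDerivAt_id z).sub_const z).mul (hB.div hA hAc).hasDerivAt).add_const κ
    rw [dslope_same]
    refine (hderiv.congr_of_eventuallyEq ?_).deriv
    filter_upwards [hBA, hA.continuousAt.eventually_ne hAc] with w hw hAw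
    rw [← mul_div_assoc, hw]
    field_simp
    ring
  · rw [dslope_of_ne _ hzc, slope_def_field, hκ, div_sub' hAz, div_div, mul_comm (A z) κ, ← hz,
      mul_comm (A z) (z - c), mul_div_mul_left _ _ (sub_ne_zero.2 hzc)]

theorem TendstoContinuouslyOn.ratio_of_sub_mul_eq {A B : ℕ → ℂ → ℂ} (hΩ : IsOpen Ω)
    (hA : TendstoContinuouslyOn (fun n z => A (n + 1) z / A n z) g atTop Ω)
    (hg : ∀ z ∈ Ω, g z ≠ 0) (hAd : ∀ n, DifferentiableOn ℂ (A n) Ω)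
    (hBd : ∀ n, DifferentiableOn ℂ (B n) Ω) (hc : c ∈ Ω)
    (hgc : ∀ z ∈ Ω, _root_.dslope g c z ≠ 0) {κ : ℕ → ℂ}
    (hB : ∀ᶠ n in atTop, ∀ z ∈ Ω, (z - c) * B n z = A (n + 1) z - κ n * A n z) :
    TendstoContinuouslyOn (fun n z => B (n + 1) z / B n z) g atTop Ω := by
  have hA0 : ∀ z ∈ Ω, ∀ᶠ q : ℕ × ℂ in atTop ×ˢ 𝓝[Ω] z, A q.1 q.2 ≠ 0 := fun z hz =>
    hA.eventually_denom_ne_zero hg hz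
  have hAc : ∀ᶠ n in atTop, A n c ≠ 0 :=
    (tendsto_id.prodMk (tendsto_const_nhdsWithin hc)).eventually (hA0 c hc)
  refine hA.ratio_of_div hg ((hA.dslope hΩ hc (eventually_prod_differentiableAt_div hΩ
    (fun n => hAd (n + 1)) hAd hc (hA0 c hc))).congr' fun z hz => ?_) hgc
  filter_upwards [hA0 z hz, tendsto_fst.eventually (hAc.and hB),
    tendsto_snd.eventually self_mem_nhdsWithin] with q hq hqB hqΩ
  have hnhds : ∀ᶠ w in 𝓝 c, w ∈ Ω := hΩ.mem_nhds hc
  exact dslope_div_eq_of_sub_mul_eq hqB.1 ((hAd q.1).differentiableAt hnhds)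
    ((hBd q.1).differentiableAt hnhds) (hnhds.mono (hqB.2 · ·)) q.2 hq (hqB.2 q.2 hqΩ)

theorem dslope_ne_zero_of_injOn (hg : InjOn g Ω) (hc : c ∈ Ω) (hg' : deriv g c ≠ 0) {z : ℂ}
    (hz : z ∈ Ω) : dslope g c z ≠ 0 := by
  rcases eq_or_ne z c with rfl | hzc
  · rwa [dslope_same]
  · rw [dslope_of_ne _ hzc, slope_def_field]
    exact div_ne_zero (sub_ne_zero.2 fun h => hzc (hg hz hc h)) (sub_ne_zero.2 hzc)

end ComplexRatioLimits

/-! ### Logarithmic derivatives -/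

section LogDerivative

theorem norm_sub_natCast_mul_le_of_norm_increment_le {R : Type*} [SeminormedRing R] {u : ℕ → R}
    {a : R} {ε : ℝ} (hε : 0 ≤ ε) {N n : ℕ} (hNn : N ≤ n)
    (hu : ∀ m, N ≤ m → ‖u (m + 1) - u m - a‖ ≤ ε) :
    ‖u n - n * a‖ ≤ n * ε + ‖u N - N * a‖ := by
  have hsum : dist (u N - N * a) (u n - n * a) ≤ (n - N : ℕ) * ε := by
    have := dist_le_Ico_sum_of_dist_le (f := fun m : ℕ => u m - m * a) (d := fun _ => ε) hNn ?_
    · simpa using this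
    · intro m hm _
      rw [dist_comm, dist_eq_norm]
      refine (congrArg norm ?_).trans_le (hu m hm)
      rw [Nat.cast_succ, add_mul, one_mul]
      abel
  have hcast : ((n - N : ℕ) : ℝ) * ε ≤ n * ε := by
    gcongr
    exact n.sub_le N
  rw [dist_comm, dist_eq_norm] at hsum
  linarith [norm_sub_norm_le (u n - n * a) (u N - N * a)]

theorem TendstoContinuouslyOn.inv_mul_of_sub {𝕜 X : Type*} [RCLike 𝕜] [TopologicalSpace X]
    {F : ℕ → X → 𝕜} {g : X → 𝕜} {s : Set X}
    (hF : TendstoContinuouslyOn (fun n x => F (n + 1) x - F n x) g atTop s)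
    (hc : ∀ x ∈ s, ∀ᶠ n in atTop, ContinuousWithinAt (F n) s x) :
    TendstoContinuouslyOn (fun (n : ℕ) x => 1 / (n : 𝕜) * F n x) g atTop s := by
  intro x hx
  rw [Metric.tendsto_nhds]
  intro ε hε
  obtain ⟨P, hP, R, hR, hPR⟩ :=
    eventually_prod_iff.1 (Metric.tendsto_nhds.1 (hF x hx) (ε / 2) (half_pos hε))
  obtain ⟨N₀, hN₀⟩ := eventually_atTop.1 hP
  obtain ⟨N, hcN, hN⟩ := ((hc x hx).and (eventually_ge_atTop N₀)).exists
  obtain ⟨C, hC⟩ : ∃ C : ℝ, ∀ᶠ y in 𝓝[s] x, ‖F N y - N * g x‖ < C :=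
    ⟨‖F N x - N * g x‖ + 1,
      (hcN.sub continuousWithinAt_const).norm.eventually (gt_mem_nhds (lt_add_one _))⟩
  have hsmall : ∀ᶠ n : ℕ in atTop, C / n < ε / 2 :=
    (tendsto_const_nhds.div_atTop tendsto_natCast_atTop_atTop).eventually
      (gt_mem_nhds (half_pos hε))
  filter_upwards [(hsmall.and (eventually_gt_atTop N)).prod_mk (hC.and hR)]
    with ⟨n, y⟩ ⟨⟨hn, hNn⟩, hy, hRy⟩
  have hbound : ‖F n y - n * g x‖ ≤ n * (ε / 2) + ‖F N y - N * g x‖ := by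
    refine norm_sub_natCast_mul_le_of_norm_increment_le (u := fun n => F n y) (half_pos hε).le
      hNn.le fun m hm => ?_
    rw [← dist_eq_norm]
    exact (hPR (hN₀ m (hN.trans hm)) hRy).le
  have hn0 : (0 : ℝ) < n := by exact_mod_cast (Nat.zero_le N).trans_lt hNn
  have hn𝕜 : (n : 𝕜) ≠ 0 := by exact_mod_cast hn0.ne'
  calc dist (1 / (n : 𝕜) * F n y) (g x) = ‖F n y - n * g x‖ / n := by
        rw [dist_eq_norm, ← RCLike.norm_natCast (K := 𝕜) n, ← norm_div]
        congr 1
        field_simp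
    _ < (n * (ε / 2) + C) / n := by
        gcongr
        exact hbound.trans_lt (by gcongr)
    _ = ε / 2 + C / n := by field_simp
    _ < ε := by linarith

variable {Ω : Set ℂ} {F : ℕ → ℂ → ℂ} {g : ℂ → ℂ}

theorem TendstoContinuouslyOn.deriv {ι : Type*} {p : Filter ι} [p.NeBot] {F : ι → ℂ → ℂ}
    (hF : TendstoContinuouslyOn F g p Ω) (hΩ : IsOpen Ω)
    (hFd : ∀ z ∈ Ω, ∀ᶠ q : ι × ℂ in p ×ˢ 𝓝 z, DifferentiableAt ℂ (F q.1) q.2) :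
    TendstoContinuouslyOn (fun i => deriv (F i)) (deriv g) p Ω := by
  intro z hz
  obtain ⟨ρ, hρ, hd⟩ := exists_ball_eventually_of_eventually_prod_nhds
    (P := fun i w => DifferentiableAt ℂ (F i) w) (hFd z hz)
  have hUo : IsOpen (Metric.ball z ρ ∩ Ω) := Metric.isOpen_ball.inter hΩ
  have hzU : z ∈ Metric.ball z ρ ∩ Ω := ⟨Metric.mem_ball_self hρ, hz⟩
  have hdU : ∀ᶠ i in p, DifferentiableOn ℂ (F i) (Metric.ball z ρ ∩ Ω) :=
    hd.mono fun i hi w hw => (hi w hw.1).differentiableWithinAt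
  have hFU := (hF.mono (t := Metric.ball z ρ ∩ Ω) inter_subset_right).tendstoLocallyUniformlyOn
  have hgU := ((hFU.differentiableOn hdU hUo).deriv hUo).continuousOn
  have hlim := (tendstoContinuouslyOn_iff_tendstoLocallyUniformlyOn hgU).2
    (hFU.deriv hdU hUo) z hzU
  rwa [hUo.nhdsWithin_eq hzU, ← hΩ.nhdsWithin_eq hz] at hlim

theorem TendstoContinuouslyOn.inv_mul_logDeriv (hΩ : IsOpen Ω)
    (hF : TendstoContinuouslyOn (fun n z => F (n + 1) z / F n z) g atTop Ω)
    (hg : ∀ z ∈ Ω, g z ≠ 0) (hFd : ∀ n, DifferentiableOn ℂ (F n) Ω) :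
    TendstoContinuouslyOn (fun (n : ℕ) z => 1 / (n : ℂ) * logDeriv (F n) z) (logDeriv g) atTop
      Ω := by
  have hF0 : ∀ z ∈ Ω, ∀ᶠ q : ℕ × ℂ in atTop ×ˢ 𝓝[Ω] z, F q.1 q.2 ≠ 0 := fun z hz =>
    hF.eventually_denom_ne_zero hg hz
  refine TendstoContinuouslyOn.inv_mul_of_sub ?_ fun z hz => ?_
  · refine ((hF.deriv hΩ fun z hz => eventually_prod_differentiableAt_div hΩ (fun n => hFd (n + 1))
      hFd hz (hF0 z hz)).div hF hg).congr' fun z hz => ?_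
    filter_upwards [hF.eventually_ne hz (hg z hz), tendsto_snd.eventually self_mem_nhdsWithin]
      with q hq hqΩ
    obtain ⟨h1, h0⟩ := div_ne_zero_iff.1 hq
    rw [← logDeriv_apply]
    exact logDeriv_div q.2 h1 h0 ((hFd _).differentiableAt (hΩ.mem_nhds hqΩ))
      ((hFd _).differentiableAt (hΩ.mem_nhds hqΩ))
  · filter_upwards [(tendsto_id.prodMk (tendsto_const_nhdsWithin hz)).eventually (hF0 z hz)]
      with n hn
    exact (((hFd n).deriv hΩ).continuousOn.continuousWithinAt hz).div
      ((hFd n).continuousOn.continuousWithinAt hz) hn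

theorem TendstoContinuouslyOn.ratio_deriv (hΩ : IsOpen Ω)
    (hF : TendstoContinuouslyOn (fun n z => F (n + 1) z / F n z) g atTop Ω)
    (hg : ∀ z ∈ Ω, g z ≠ 0) (hg' : ∀ z ∈ Ω, logDeriv g z ≠ 0)
    (hFd : ∀ n, DifferentiableOn ℂ (F n) Ω) :
    TendstoContinuouslyOn (fun n z => _root_.deriv (F (n + 1)) z / _root_.deriv (F n) z) g
      atTop Ω := by
  have hscaled : TendstoContinuouslyOn
      (fun (n : ℕ) z => 1 / ((n + 1 : ℕ) : ℂ) * _root_.deriv (F (n + 1)) z /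
        (1 / (n : ℂ) * _root_.deriv (F n) z)) g atTop Ω :=
    hF.ratio_of_div (B := fun n z => 1 / (n : ℂ) * _root_.deriv (F n) z) hg
      (by simpa only [logDeriv_apply, ← mul_div_assoc] using hF.inv_mul_logDeriv hΩ hg hFd) hg'
  have hquot : Tendsto (fun n : ℕ => ((n + 1 : ℕ) : ℂ) / n) atTop (𝓝 1) := by
    simpa using (tendsto_natCast_div_add_atTop (1 : ℂ)).inv₀ one_ne_zero
  refine (((TendstoContinuouslyOn.of_tendsto hquot Ω).mul hscaled).congr' ?_).congr_limit
    fun z _ => one_mul (g z)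
  intro z _
  filter_upwards [tendsto_fst.eventually (eventually_gt_atTop 0)] with q hq
  have hq0 : (q.1 : ℂ) ≠ 0 := by exact_mod_cast hq.ne'
  have hq1 : ((q.1 + 1 : ℕ) : ℂ) ≠ 0 := by exact_mod_cast q.1.succ_ne_zero
  rcases eq_or_ne (_root_.deriv (F q.1) q.2) 0 with h0 | h0
  · simp [h0]
  · field_simp

end LogDerivative

section PolynomialSequences

variable {Ω : Set ℂ} {P : ℕ → ℂ[X]} {g : ℂ → ℂ}

theorem tendstoContinuouslyOn_ratio_iterate_derivative (hΩ : IsOpen Ω)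
    (hP : TendstoContinuouslyOn (fun n z => (P (n + 1)).eval z / (P n).eval z) g atTop Ω)
    (hg : ∀ z ∈ Ω, g z ≠ 0) (hg' : ∀ z ∈ Ω, logDeriv g z ≠ 0) (ν : ℕ) :
    TendstoContinuouslyOn
      (fun n z => (derivative^[ν] (P (n + 1))).eval z / (derivative^[ν] (P n)).eval z)
      g atTop Ω := by
  induction ν with
  | zero => exact hP
  | succ ν ih =>
    simpa only [Function.iterate_succ_apply', Polynomial.deriv] using
      ih.ratio_deriv (F := fun n z => (derivative^[ν] (P n)).eval z) hΩ hg hg'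
        fun n => (derivative^[ν] (P n)).differentiableOn

theorem natDegree_iterate_derivative_eq {K : Type*} [Field K] [CharZero K] (p : K[X]) (ν : ℕ) :
    (derivative^[ν] p).natDegree = p.natDegree - ν := by
  induction ν with
  | zero => rfl
  | succ ν ih => rw [Function.iterate_succ_apply', natDegree_derivative, ih, Nat.sub_sub]

theorem isRoot_derivative_mem_of_convex {p : ℂ[X]} (hp : 0 < p.natDegree) {s : Set ℂ}
    (hs : Convex ℝ s) (hps : ∀ z, p.IsRoot z → z ∈ s) {z : ℂ} (hz : p.derivative.IsRoot z) :
    z ∈ s := by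
  have hd0 : derivative p ≠ 0 := fun h => hp.ne' (Polynomial.derivative_eq_zero.1 h)
  have hroots : p.rootSet ℂ ⊆ s := fun w hw => hps w (by simpa using (mem_rootSet.1 hw).2)
  exact convexHull_min hroots hs (rootSet_derivative_subset_convexHull_rootSet
    (natDegree_pos_iff_degree_pos.1 hp) (mem_rootSet.2 ⟨hd0, by simpa using hz⟩))

theorem norm_derivative_div_eval_le {p : ℂ[X]} {R : ℝ} (hp : ∀ z, p.IsRoot z → ‖z‖ ≤ R) {z : ℂ}
    (hz : R < ‖z‖) : ‖p.derivative.eval z / p.eval z‖ ≤ p.natDegree / (‖z‖ - R) := by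
  have hz0 : p.eval z ≠ 0 := fun h => (hp z h).not_gt hz
  have hterm : ∀ x ∈ (p.roots.map fun w => 1 / (z - w)).map norm, x ≤ 1 / (‖z‖ - R) := by
    simp only [Multiset.map_map, Multiset.mem_map, Function.comp_apply]
    rintro _ ⟨w, hw, rfl⟩
    rw [norm_div, norm_one]
    have := hp w (isRoot_of_mem_roots hw)
    exact one_div_le_one_div_of_le (sub_pos.2 hz) (by linarith [norm_sub_norm_le z w])
  rw [(IsAlgClosed.splits p).eval_derivative_div_eval_of_ne_zero hz0]
  calc _ ≤ _ := norm_multiset_sum_le _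
    _ ≤ _ := Multiset.sum_le_card_nsmul _ _ hterm
    _ ≤ p.natDegree * (1 / (‖z‖ - R)) := by
      rw [Multiset.card_map, Multiset.card_map, nsmul_eq_mul]
      have hcard : (p.roots.card : ℝ) ≤ p.natDegree := by exact_mod_cast p.card_roots'
      exact mul_le_mul_of_nonneg_right hcard (one_div_nonneg.2 (sub_pos.2 hz).le)
    _ = p.natDegree / (‖z‖ - R) := mul_one_div _ _

theorem exists_eventually_norm_root_le_of_ratio_cobounded
    (hP : Tendsto (fun q : ℕ × ℂ => (P (q.1 + 1)).eval q.2 / (P q.1).eval q.2)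
      (atTop ×ˢ Bornology.cobounded ℂ) (Bornology.cobounded ℂ)) :
    ∃ R : ℝ, ∀ᶠ n in atTop, ∀ z, (P n).IsRoot z → ‖z‖ ≤ R := by
  obtain ⟨U, hU, V, hV, hUV⟩ := eventually_prod_iff.1 (hP.eventually_ne_cobounded 0)
  obtain ⟨R, -, hR⟩ := hasBasis_cobounded_norm.mem_iff.1 hV
  refine ⟨R, hU.mono fun n hn z hz => le_of_not_gt fun hzR => ?_⟩
  exact (div_ne_zero_iff.1 (hUV hn (hR (le_of_lt hzR)))).2 hz

theorem eventually_norm_root_iterate_derivative_le {R : ℝ}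
    (hdeg : ∀ᶠ n in atTop, (P n).natDegree = n)
    (hP : ∀ᶠ n in atTop, ∀ z, (P n).IsRoot z → ‖z‖ ≤ R) (ν : ℕ) :
    ∀ᶠ n in atTop, ∀ z, (derivative^[ν] (P n)).IsRoot z → ‖z‖ ≤ R := by
  induction ν with
  | zero => exact hP
  | succ ν ih =>
    filter_upwards [ih, hdeg, eventually_gt_atTop ν] with n hn hd hνn z hz
    rw [Function.iterate_succ_apply'] at hz
    have hpos : 0 < (derivative^[ν] (P n)).natDegree := by
      rw [natDegree_iterate_derivative_eq, hd]
      exact Nat.sub_pos_of_lt hνn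
    simpa using isRoot_derivative_mem_of_convex hpos (convex_closedBall 0 R)
      (by simpa using hn) hz

theorem tendsto_inv_mul_derivative_div_cobounded {R : ℝ}
    (hdeg : ∀ᶠ n in atTop, (P n).natDegree ≤ n)
    (hP : ∀ᶠ n in atTop, ∀ z, (P n).IsRoot z → ‖z‖ ≤ R) :
    Tendsto (fun q : ℕ × ℂ => 1 / (q.1 : ℂ) * ((P q.1).derivative.eval q.2 / (P q.1).eval q.2))
      (atTop ×ˢ Bornology.cobounded ℂ) (𝓝 0) := by
  have hnorm : Tendsto (fun q : ℕ × ℂ => ‖q.2‖ - R) (atTop ×ˢ Bornology.cobounded ℂ) atTop :=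
    tendsto_atTop_add_const_right _ (-R) (tendsto_norm_cobounded_atTop.comp tendsto_snd)
  refine squeeze_zero_norm' ?_ hnorm.inv_tendsto_atTop
  filter_upwards [tendsto_fst.eventually (hdeg.and hP),
    tendsto_fst.eventually (eventually_gt_atTop 0), hnorm.eventually_gt_atTop 0]
    with ⟨n, z⟩ ⟨hd, hroots⟩ hn hz
  rw [norm_mul, norm_div, norm_one, Complex.norm_natCast, Pi.inv_apply]
  calc 1 / (n : ℝ) * ‖(P n).derivative.eval z / (P n).eval z‖
      ≤ 1 / n * (n / (‖z‖ - R)) := by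
        gcongr
        refine (norm_derivative_div_eval_le hroots (sub_pos.1 hz)).trans ?_
        gcongr
    _ = (‖z‖ - R)⁻¹ := by field_simp

end PolynomialSequences

/-! ### The conformal map `phi` -/

/-- The segment `[-1,1]` of the real axis, along which `sqrtB` and `phi` are cut. -/
def realCut : Set ℂ := Complex.ofReal '' Icc (-1) 1

theorem isOpen_compl_realCut : IsOpen realCutᶜ :=
  (isCompact_Icc.image Complex.continuous_ofReal).isClosed.isOpen_compl

theorem ne_zero_of_notMem_realCut {z : ℂ} (hz : z ∉ realCut) : z ≠ 0 := by
  rintro rfl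
  exact hz ⟨0, by norm_num, by simp⟩

theorem one_sub_one_div_sq_mem_slitPlane {z : ℂ} (hz : z ∉ realCut) :
    1 - 1 / z ^ 2 ∈ Complex.slitPlane := by
  by_contra hslit
  rw [Complex.mem_slitPlane_iff, not_or, not_lt, not_not, Complex.sub_re, Complex.sub_im,
    Complex.one_re, Complex.one_im, zero_sub, neg_eq_zero] at hslit
  set t := (1 / z ^ 2).re
  have ht : 1 ≤ t := sub_nonpos.1 hslit.1
  have hzt : z ^ 2 = ((√t)⁻¹ : ℝ) ^ 2 := by
    have hinv : (t : ℂ) = 1 / z ^ 2 := Complex.ext rfl hslit.2.symm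
    rw [← Complex.ofReal_pow, inv_pow, Real.sq_sqrt (by linarith), Complex.ofReal_inv, hinv,
      one_div, inv_inv]
  have hle : (√t)⁻¹ ≤ 1 := inv_le_one_of_one_le₀ (Real.one_le_sqrt.2 ht)
  have hpos : 0 ≤ (√t)⁻¹ := by positivity
  rcases sq_eq_sq_iff_eq_or_eq_neg.1 hzt with h | h
  · exact hz ⟨(√t)⁻¹, ⟨by linarith, hle⟩, h.symm⟩
  · exact hz ⟨-(√t)⁻¹, ⟨by linarith, by linarith⟩, by rw [h, Complex.ofReal_neg]⟩

theorem re_cpow_half_pos {w : ℂ} (hw : w ∈ Complex.slitPlane) : 0 < (w ^ ((1 : ℂ) / 2)).re := by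
  rw [Complex.cpow_def_of_ne_zero (Complex.slitPlane_ne_zero hw), Complex.exp_re]
  have him : (Complex.log w * (1 / 2)).im = Complex.arg w / 2 := by
    rw [mul_one_div, Complex.div_ofNat_im, Complex.log_im]
  rw [him]
  refine mul_pos (Real.exp_pos _) (Real.cos_pos_of_mem_Ioo ⟨?_, ?_⟩)
  · linarith [Complex.neg_pi_lt_arg w]
  · linarith [(Complex.arg_le_pi w).lt_of_ne (Complex.mem_slitPlane_iff_arg.1 hw).1]

theorem norm_one_sub_lt_norm_one_add {s : ℂ} (hs : 0 < s.re) : ‖1 - s‖ < ‖1 + s‖ := by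
  rw [← sq_lt_sq₀ (norm_nonneg _) (norm_nonneg _), ← Complex.normSq_eq_norm_sq,
    ← Complex.normSq_eq_norm_sq, Complex.normSq_sub, Complex.normSq_add]
  simp only [one_mul, Complex.conj_re]
  linarith

theorem norm_sub_sqrtB_lt_norm_phi {z : ℂ} (hz : z ∉ realCut) : ‖z - sqrtB z‖ < ‖phi z‖ := by
  have hsub : z - sqrtB z = z * (1 - (1 - 1 / z ^ 2) ^ ((1 : ℂ) / 2)) := by unfold sqrtB; ring
  have hphi : phi z = z * (1 + (1 - 1 / z ^ 2) ^ ((1 : ℂ) / 2)) := by unfold phi sqrtB; ring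
  rw [hsub, hphi, norm_mul, norm_mul]
  exact mul_lt_mul_of_pos_left
    (norm_one_sub_lt_norm_one_add (re_cpow_half_pos (one_sub_one_div_sq_mem_slitPlane hz)))
    (norm_pos_iff.2 (ne_zero_of_notMem_realCut hz))

theorem sqrtB_sq {z : ℂ} (hz : z ≠ 0) : sqrtB z ^ 2 = z ^ 2 - 1 := by
  have hsq := Complex.cpow_nat_inv_pow (1 - 1 / z ^ 2) (n := 2) two_ne_zero
  rw [Nat.cast_ofNat, ← one_div] at hsq
  rw [sqrtB, mul_pow, hsq]
  field_simp

theorem phi_mul_sub_sqrtB {z : ℂ} (hz : z ≠ 0) : phi z * (z - sqrtB z) = 1 := by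
  unfold phi
  linear_combination -sqrtB_sq hz

theorem sub_sqrtB_eq_inv_phi {z : ℂ} (hz : z ≠ 0) : z - sqrtB z = (phi z)⁻¹ :=
  eq_inv_of_mul_eq_one_right (phi_mul_sub_sqrtB hz)

theorem phi_sq_add_one {z : ℂ} (hz : z ≠ 0) : phi z ^ 2 + 1 = 2 * z * phi z := by
  unfold phi
  linear_combination sqrtB_sq hz

theorem one_lt_norm_phi {z : ℂ} (hz : z ∉ realCut) : 1 < ‖phi z‖ := by
  have hmul : ‖phi z‖ * ‖z - sqrtB z‖ = 1 := by
    rw [← norm_mul, phi_mul_sub_sqrtB (ne_zero_of_notMem_realCut hz), norm_one]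
  nlinarith [norm_sub_sqrtB_lt_norm_phi hz, norm_nonneg (z - sqrtB z)]

theorem phi_ne_zero {z : ℂ} (hz : z ∉ realCut) : phi z ≠ 0 :=
  norm_pos_iff.1 (zero_lt_one.trans (one_lt_norm_phi hz))

theorem phi_mul_phi_ne_one {z w : ℂ} (hz : z ∉ realCut) (hw : w ∉ realCut) :
    phi z * phi w ≠ 1 := fun h => by
  have hnorm : ‖phi z‖ * ‖phi w‖ = 1 := by rw [← norm_mul, h, norm_one]
  exact (one_lt_mul_of_lt_of_le (one_lt_norm_phi hz) (one_lt_norm_phi hw).le).ne' hnorm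

theorem sqrtB_ne_zero {z : ℂ} (hz : z ∉ realCut) : sqrtB z ≠ 0 := fun h => by
  have hlt := norm_sub_sqrtB_lt_norm_phi hz
  rw [phi, h, sub_zero, add_zero] at hlt
  exact hlt.false

theorem differentiableAt_sqrtB {z : ℂ} (hz : z ∉ realCut) : DifferentiableAt ℂ sqrtB z := by
  have hz0 : z ^ 2 ≠ 0 := pow_ne_zero 2 (ne_zero_of_notMem_realCut hz)
  refine differentiableAt_fun_id.mul
    (DifferentiableAt.cpow_const ?_ (one_sub_one_div_sq_mem_slitPlane hz))
  fun_prop (disch := assumption)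

theorem hasDerivAt_sqrtB {z : ℂ} (hz : z ∉ realCut) : HasDerivAt sqrtB (z / sqrtB z) z := by
  have hd := (differentiableAt_sqrtB hz).hasDerivAt
  have hsq : HasDerivAt (fun w => sqrtB w ^ 2) (2 * z) z := by
    have hpoly : HasDerivAt (fun w : ℂ => w ^ 2 - 1) (2 * z) z := by
      simpa using (hasDerivAt_pow 2 z).sub_const 1
    refine hpoly.congr_of_eventuallyEq ?_
    filter_upwards [isOpen_compl_realCut.mem_nhds hz] with w hw
      using sqrtB_sq (ne_zero_of_notMem_realCut hw)
  have hmul : 2 * sqrtB z * deriv sqrtB z = 2 * z := by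
    simpa using (hd.fun_pow 2).unique hsq
  rwa [show deriv sqrtB z = z / sqrtB z by
    rw [eq_div_iff (sqrtB_ne_zero hz)]; linear_combination hmul / 2] at hd

theorem hasDerivAt_phi {z : ℂ} (hz : z ∉ realCut) : HasDerivAt phi (phi z / sqrtB z) z := by
  have hs := sqrtB_ne_zero hz
  rw [show phi z / sqrtB z = 1 + z / sqrtB z by rw [phi]; field_simp; ring]
  exact (hasDerivAt_id z).add (hasDerivAt_sqrtB hz)

theorem injOn_phi : InjOn phi realCutᶜ := by
  intro z hz w hw hzw
  have hquad : (z - w) * (2 * phi w) = 0 := by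
    have hz2 := phi_sq_add_one (ne_zero_of_notMem_realCut hz)
    rw [hzw] at hz2
    linear_combination phi_sq_add_one (ne_zero_of_notMem_realCut hw) - hz2
  exact sub_eq_zero.1
    ((mul_eq_zero.1 hquad).resolve_right (mul_ne_zero two_ne_zero (phi_ne_zero hw)))

theorem logDeriv_phi_div_two {z : ℂ} (hz : z ∉ realCut) :
    logDeriv (fun w => phi w / 2) z = 1 / sqrtB z := by
  have hφ := phi_ne_zero hz
  have hs := sqrtB_ne_zero hz
  rw [logDeriv_apply, ((hasDerivAt_phi hz).div_const 2).deriv]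
  field_simp

theorem tendsto_one_div_sqrtB_cobounded :
    Tendsto (fun z => 1 / sqrtB z) (Bornology.cobounded ℂ) (𝓝 0) := by
  have hsq : Tendsto (fun z : ℂ => ‖z‖ ^ 2 - 1) (Bornology.cobounded ℂ) atTop :=
    tendsto_atTop_add_const_right _ _
      ((tendsto_pow_atTop two_ne_zero).comp tendsto_norm_cobounded_atTop)
  have hle : ∀ᶠ z in Bornology.cobounded ℂ, ‖z‖ ^ 2 - 1 ≤ ‖sqrtB z‖ ^ 2 := by
    filter_upwards [Bornology.eventually_ne_cobounded (0 : ℂ)] with z hz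
    rw [← norm_pow, ← norm_pow, sqrtB_sq hz, ← norm_one (α := ℂ)]
    exact norm_sub_norm_le _ _
  have hnorm : Tendsto (fun z => ‖sqrtB z‖) (Bornology.cobounded ℂ) atTop := by
    simpa [Function.comp_def, Real.sqrt_sq] using
      Real.tendsto_sqrt_atTop.comp (tendsto_atTop_mono' _ hle hsq)
  simpa only [one_div, Function.comp_def] using
    Filter.tendsto_inv₀_cobounded.comp (tendsto_norm_atTop_iff_cobounded.1 hnorm)

/-! ### Orthogonality and functions of the second kind -/

section Support

variable {μ : Measure ℝ}

theorem msupp_eq_support (μ : Measure ℝ) : msupp μ = μ.support := by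
  ext x
  simp only [msupp, mem_ofPred_eq, Measure.mem_support_iff_forall, pos_iff_ne_zero]

theorem ae_mem_msupp (μ : Measure ℝ) : ∀ᵐ x ∂μ, x ∈ msupp μ := by
  rw [msupp_eq_support]
  exact Measure.support_mem_ae

theorem integrable_of_continuousOn_msupp [IsFiniteMeasureOnCompacts μ] {E : Type*}
    [NormedAddCommGroup E] {g : ℝ → E} (hμ : IsCompact (msupp μ))
    (hg : ContinuousOn g (msupp μ)) : Integrable g μ := by
  rw [← Measure.restrict_eq_self_of_ae_mem (ae_mem_msupp μ)]
  exact hg.integrableOn_compact hμ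

theorem isOpen_compl_msuppC (μ : Measure ℝ) : IsOpen (msuppC μ)ᶜ := by
  rw [msuppC, msupp_eq_support]
  exact (Complex.isometry_ofReal.isClosedEmbedding.isClosedMap _
    Measure.isClosed_support).isOpen_compl

theorem sub_ofReal_ne_zero {z : ℂ} (hz : z ∉ msuppC μ) {x : ℝ} (hx : x ∈ msupp μ) :
    z - x ≠ 0 :=
  fun h => hz ⟨x, hx, (sub_eq_zero.1 h).symm⟩

theorem exists_forall_mem_ball_le_norm_sub_ofReal {z : ℂ} (hz : z ∉ msuppC μ) :
    ∃ δ > 0, ∀ w ∈ Metric.ball z δ, ∀ x ∈ msupp μ, δ ≤ ‖w - x‖ := by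
  obtain ⟨ε, hε, hball⟩ := Metric.isOpen_iff.1 (isOpen_compl_msuppC μ) z hz
  refine ⟨ε / 2, half_pos hε, fun w hw x hx => le_of_not_gt fun hlt => ?_⟩
  have hxz : (x : ℂ) ∈ Metric.ball z ε := by
    rw [Metric.mem_ball] at hw ⊢
    rw [← dist_eq_norm, dist_comm] at hlt
    linarith [dist_triangle (x : ℂ) w z]
  exact hball hxz ⟨x, hx, rfl⟩

theorem continuousOn_eval_ofReal (p : ℂ[X]) (s : Set ℝ) :
    ContinuousOn (fun x : ℝ => p.eval (x : ℂ)) s :=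
  (p.continuous.comp Complex.continuous_ofReal).continuousOn

theorem integrable_eval_mul_eval_mul [IsFiniteMeasureOnCompacts μ] {r : ℝ → ℂ}
    (hμ : IsCompact (msupp μ)) (hr : ContinuousOn r (msupp μ)) (p q : ℂ[X]) :
    Integrable (fun x : ℝ => p.eval (x : ℂ) * q.eval (x : ℂ) * r x) μ :=
  integrable_of_continuousOn_msupp hμ
    (((continuousOn_eval_ofReal p _).mul (continuousOn_eval_ofReal q _)).mul hr)

end Support

section SecondKind

variable {μ : Measure ℝ} {r : ℝ → ℂ}

/-- The function of the second kind `z ↦ ∫ p(x) r(x) / (z - x) dμ(x)` of a polynomial `p` with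
respect to the complex measure `r dμ`. -/
noncomputable def secondKind (μ : Measure ℝ) (r : ℝ → ℂ) (p : ℂ[X]) (z : ℂ) : ℂ :=
  ∫ x, p.eval (x : ℂ) * r x / (z - x) ∂μ

theorem integrable_secondKind [IsFiniteMeasureOnCompacts μ] (hμ : IsCompact (msupp μ))
    (hr : ContinuousOn r (msupp μ)) (p : ℂ[X]) {z : ℂ} (hz : z ∉ msuppC μ) :
    Integrable (fun x : ℝ => p.eval (x : ℂ) * r x / (z - x)) μ :=
  integrable_of_continuousOn_msupp hμ (((continuousOn_eval_ofReal p _).mul hr).div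
    (by fun_prop) fun _ hx => sub_ofReal_ne_zero hz hx)

theorem secondKind_C_mul (k : ℂ) (p : ℂ[X]) (z : ℂ) :
    secondKind μ r (C k * p) z = k * secondKind μ r p z := by
  unfold secondKind
  rw [← integral_const_mul]
  simp only [eval_mul, eval_C, mul_assoc, mul_div_assoc]

theorem secondKind_add [IsFiniteMeasureOnCompacts μ] (hμ : IsCompact (msupp μ))
    (hr : ContinuousOn r (msupp μ)) (p q : ℂ[X]) {z : ℂ} (hz : z ∉ msuppC μ) :
    secondKind μ r (p + q) z = secondKind μ r p z + secondKind μ r q z := by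
  unfold secondKind
  rw [← integral_add (integrable_secondKind hμ hr p hz) (integrable_secondKind hμ hr q hz)]
  simp only [eval_add, add_mul, add_div]

theorem secondKind_sub_C_mul [IsFiniteMeasureOnCompacts μ] (hμ : IsCompact (msupp μ))
    (hr : ContinuousOn r (msupp μ)) (p q : ℂ[X]) (k : ℂ) {z : ℂ} (hz : z ∉ msuppC μ) :
    secondKind μ r (p - C k * q) z = secondKind μ r p z - k * secondKind μ r q z := by
  rw [sub_eq_add_neg, ← neg_mul, ← C_neg, secondKind_add hμ hr _ _ hz, secondKind_C_mul, neg_mul,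
    ← sub_eq_add_neg]

theorem secondKind_sub_mul_weight (c : ℂ) (p : ℂ[X]) (z : ℂ) :
    secondKind μ (fun x => (x - c) * r x) p z = secondKind μ r ((X - C c) * p) z := by
  refine integral_congr_ae (.of_forall fun x => ?_)
  simp only [eval_mul, eval_sub, eval_X, eval_C]
  ring

theorem sub_mul_secondKind_div_weight [IsFiniteMeasureOnCompacts μ] (hμ : IsCompact (msupp μ))
    (hr : ContinuousOn r (msupp μ)) (p : ℂ[X]) {d z : ℂ} (hd : d ∉ msuppC μ)
    (hz : z ∉ msuppC μ) :
    (z - d) * secondKind μ (fun x => r x / (x - d)) p z =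
      secondKind μ r p z - secondKind μ r p d := by
  unfold secondKind
  rw [← integral_const_mul, ← integral_sub (integrable_secondKind hμ hr p hz)
    (integrable_secondKind hμ hr p hd)]
  refine integral_congr_ae ?_
  filter_upwards [ae_mem_msupp μ] with x hx
  have hzx := sub_ofReal_ne_zero hz hx
  have hdx := sub_ofReal_ne_zero hd hx
  have hxd : (x : ℂ) - d ≠ 0 := by rwa [← neg_sub, neg_ne_zero]
  field_simp
  ring

theorem eval_mul_secondKind [IsFiniteMeasureOnCompacts μ] (hμ : IsCompact (msupp μ))
    (hr : ContinuousOn r (msupp μ)) (p q : ℂ[X]) {z : ℂ} (hz : z ∉ msuppC μ) :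
    p.eval z * secondKind μ r q z = secondKind μ r (p * q) z +
      ∫ x : ℝ, (p /ₘ (X - C z)).eval (x : ℂ) * q.eval (x : ℂ) * r x ∂μ := by
  unfold secondKind
  rw [← integral_const_mul, ← integral_add (integrable_secondKind hμ hr _ hz)
    (integrable_eval_mul_eval_mul hμ hr _ q)]
  refine integral_congr_ae ?_
  filter_upwards [ae_mem_msupp μ] with x hx
  have hzx := sub_ofReal_ne_zero hz hx
  have hdiv : p.eval (x : ℂ) = p.eval z + (x - z) * (p /ₘ (X - C z)).eval (x : ℂ) := by
    conv_lhs => rw [← modByMonic_add_div p (X - C z), modByMonic_X_sub_C_eq_C_eval]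
    simp only [eval_add, eval_mul, eval_C, eval_sub, eval_X]
  rw [eval_mul, hdiv]
  field_simp
  ring

theorem differentiableAt_secondKind [IsFiniteMeasureOnCompacts μ] (hμ : IsCompact (msupp μ))
    (hr : ContinuousOn r (msupp μ)) (p : ℂ[X]) {z : ℂ} (hz : z ∉ msuppC μ) :
    DifferentiableAt ℂ (secondKind μ r p) z := by
  have hpr : ContinuousOn (fun x : ℝ => p.eval (x : ℂ) * r x) (msupp μ) :=
    (continuousOn_eval_ofReal p _).mul hr
  obtain ⟨δ, hδ, hball⟩ := exists_forall_mem_ball_le_norm_sub_ofReal hz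
  refine (hasDerivAt_integral_of_dominated_loc_of_deriv_le (μ := μ)
    (F := fun w x => p.eval (x : ℂ) * r x / (w - x))
    (F' := fun w x => -(p.eval (x : ℂ) * r x) / (w - x) ^ 2)
    (bound := fun x => ‖p.eval (x : ℂ) * r x‖ / δ ^ 2)
    (Metric.ball_mem_nhds z hδ) ?_ (integrable_secondKind hμ hr p hz) ?_ ?_ ?_
    ?_).2.differentiableAt
  · filter_upwards [(isOpen_compl_msuppC μ).mem_nhds hz] with w hw
    exact (integrable_secondKind hμ hr p hw).aestronglyMeasurable
  · exact (integrable_of_continuousOn_msupp hμ (hpr.neg.div (by fun_prop)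
      fun x hx => pow_ne_zero _ (sub_ofReal_ne_zero hz hx))).aestronglyMeasurable
  · filter_upwards [ae_mem_msupp μ] with x hx w hw
    have hle := hball w hw x hx
    rw [norm_div, norm_neg, norm_pow]
    gcongr
  · exact integrable_of_continuousOn_msupp hμ (hpr.norm.div_const _)
  · filter_upwards [ae_mem_msupp μ] with x hx w hw
    have hwx : w - (x : ℂ) ≠ 0 := norm_pos_iff.1 (hδ.trans_le (hball w hw x hx))
    simpa using (hasDerivAt_const w (p.eval (x : ℂ) * r x)).fun_div
      ((hasDerivAt_id w).sub_const (x : ℂ)) hwx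

end SecondKind

section Orthogonality

variable {μ : Measure ℝ} {r : ℝ → ℂ} {n : ℕ} {q : ℂ[X]}

/-- `q` is orthogonal to all polynomials of degree less than `n` with respect to the (bilinear, not
sesquilinear) form `(p, q) ↦ ∫ p q r dμ`. -/
def IsOrthogonalBelow (μ : Measure ℝ) (r : ℝ → ℂ) (n : ℕ) (q : ℂ[X]) : Prop :=
  ∀ p : ℂ[X], p.degree < n → ∫ x, p.eval (x : ℂ) * q.eval (x : ℂ) * r x ∂μ = 0

theorem IsOrthogonalBelow.mono {m : ℕ} (hq : IsOrthogonalBelow μ r n q) (hmn : m ≤ n) :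
    IsOrthogonalBelow μ r m q :=
  fun p hp => hq p (hp.trans_le (by exact_mod_cast hmn))

theorem IsOrthogonalBelow.sub_C_mul [IsFiniteMeasureOnCompacts μ] {p : ℂ[X]}
    (hp : IsOrthogonalBelow μ r n p) (hq : IsOrthogonalBelow μ r n q)
    (hμ : IsCompact (msupp μ)) (hr : ContinuousOn r (msupp μ)) (k : ℂ) :
    IsOrthogonalBelow μ r n (p - C k * q) := by
  intro s hs
  have hsub : ∀ x : ℝ, s.eval (x : ℂ) * (p - C k * q).eval (x : ℂ) * r x =
      s.eval (x : ℂ) * p.eval (x : ℂ) * r x - k * (s.eval (x : ℂ) * q.eval (x : ℂ) * r x) := by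
    intro x
    simp only [eval_sub, eval_mul, eval_C]
    ring
  simp_rw [hsub]
  rw [integral_sub (integrable_eval_mul_eval_mul hμ hr s p)
    ((integrable_eval_mul_eval_mul hμ hr s q).const_mul k), integral_const_mul, hp s hs, hq s hs,
    mul_zero, sub_zero]

theorem isOrthogonalBelow_sub_mul_weight (c : ℂ) :
    IsOrthogonalBelow μ (fun x => (x - c) * r x) n q ↔
      IsOrthogonalBelow μ r n ((X - C c) * q) := by
  refine forall₂_congr fun p _ => ?_
  rw [integral_congr_ae (.of_forall fun x => ?_)]
  simp only [eval_mul, eval_sub, eval_X, eval_C]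
  ring

theorem degree_divByMonic_X_sub_C_lt {p : ℂ[X]} (z : ℂ) (hp : p.degree < (n + 1 : ℕ)) :
    (p /ₘ (X - C z)).degree < n := by
  rcases eq_or_ne (p /ₘ (X - C z)) 0 with h0 | h0
  · rw [h0, degree_zero]
    exact WithBot.bot_lt_coe n
  have hle : (X - C z).degree ≤ p.degree :=
    not_lt.1 (mt (divByMonic_eq_zero_iff (monic_X_sub_C z)).2 h0)
  rw [← degree_add_divByMonic (monic_X_sub_C z) hle, degree_X_sub_C,
    degree_eq_natDegree h0] at hp
  rw [degree_eq_natDegree h0]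
  norm_cast at hp ⊢
  omega

theorem IsOrthogonalBelow.eval_mul_secondKind [IsFiniteMeasureOnCompacts μ]
    (hq : IsOrthogonalBelow μ r n q) (hμ : IsCompact (msupp μ))
    (hr : ContinuousOn r (msupp μ)) {p : ℂ[X]} (hp : p.degree < (n + 1 : ℕ)) {z : ℂ}
    (hz : z ∉ msuppC μ) :
    p.eval z * secondKind μ r q z = secondKind μ r (p * q) z := by
  rw [_root_.eval_mul_secondKind hμ hr p q hz, hq _ (degree_divByMonic_X_sub_C_lt z hp), add_zero]

theorem isOrthogonalBelow_div_weight_succ [IsFiniteMeasureOnCompacts μ]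
    (hμ : IsCompact (msupp μ)) (hr : ContinuousOn r (msupp μ)) {d : ℂ} (hd : d ∉ msuppC μ) :
    IsOrthogonalBelow μ (fun x => r x / (x - d)) (n + 1) q ↔
      IsOrthogonalBelow μ r n q ∧ secondKind μ r q d = 0 := by
  have hsecond : ∀ p : ℂ[X], ∫ x : ℝ, p.eval (x : ℂ) * q.eval (x : ℂ) * (r x / (x - d)) ∂μ =
      -secondKind μ r (p * q) d := by
    intro p
    rw [secondKind, ← integral_neg]
    refine integral_congr_ae (.of_forall fun x => ?_)
    simp only [eval_mul]
    rw [← neg_sub (x : ℂ) d, div_neg, neg_neg, mul_div_assoc]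
  unfold IsOrthogonalBelow
  simp_rw [hsecond, neg_eq_zero]
  refine ⟨fun h => ⟨fun p hp => ?_, ?_⟩, fun ⟨horth, hzero⟩ p hp => ?_⟩
  · have hdeg : ((X - C d) * p).degree < ((n + 1 : ℕ) : WithBot ℕ) := by
      rcases eq_or_ne p 0 with rfl | hp0
      · rw [mul_zero, degree_zero]
        exact WithBot.bot_lt_coe _
      rw [degree_mul, degree_X_sub_C]
      rw [degree_eq_natDegree hp0] at hp ⊢
      norm_cast at hp ⊢
      omega
    have hint := _root_.eval_mul_secondKind hμ hr ((X - C d) * p) q hd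
    rwa [eval_mul, eval_sub, eval_X, eval_C, sub_self, zero_mul, zero_mul, h _ hdeg, zero_add,
      mul_divByMonic_cancel_left _ (monic_X_sub_C d), eq_comm] at hint
  · simpa using h 1 (by rw [degree_one]; exact_mod_cast n.succ_pos)
  · rw [← IsOrthogonalBelow.eval_mul_secondKind horth hμ hr hp hd, hzero, mul_zero]

/-- `p` is the monic orthogonal polynomial of degree `n` for the complex measure `r dμ`, and the
index `n` is normal in the sense of Padé approximation: no nonzero polynomial of smaller degree
satisfies the same orthogonality relations. -/
structure IsNormalOrthogonal (μ : Measure ℝ) (r : ℝ → ℂ) (n : ℕ) (p : ℂ[X]) : Prop where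
  monic : p.Monic
  natDegree_eq : p.natDegree = n
  isOrthogonalBelow : IsOrthogonalBelow μ r n p
  eq_zero_of_degree_lt : ∀ s : ℂ[X], s.degree < n → IsOrthogonalBelow μ r n s → s = 0

namespace IsNormalOrthogonal

variable [IsFiniteMeasureOnCompacts μ] {p : ℂ[X]}

theorem eq_C_coeff_mul (hp : IsNormalOrthogonal μ r n p) (hμ : IsCompact (msupp μ))
    (hr : ContinuousOn r (msupp μ)) (hq : IsOrthogonalBelow μ r n q)
    (hqn : q.degree < (n + 1 : ℕ)) : q = C (q.coeff n) * p := by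
  rw [← sub_eq_zero]
  refine hp.eq_zero_of_degree_lt _ ((degree_lt_iff_coeff_zero _ _).2 fun j hj => ?_)
    (hq.sub_C_mul hp.isOrthogonalBelow hμ hr _)
  rw [coeff_sub, coeff_C_mul]
  rcases hj.eq_or_lt with rfl | hj
  · have hcoeff : p.coeff n = 1 := hp.natDegree_eq ▸ hp.monic
    rw [hcoeff, mul_one, sub_self]
  · rw [coeff_eq_zero_of_natDegree_lt (p := p) (hp.natDegree_eq.trans_lt hj),
      (degree_lt_iff_coeff_zero _ _).1 hqn j hj, mul_zero, sub_zero]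

theorem eq_of_isQPoly (hp : IsNormalOrthogonal μ r n p) (hμ : IsCompact (msupp μ))
    (hr : ContinuousOn r (msupp μ)) (hq : IsQPoly μ r n q) : q = p := by
  obtain ⟨hq_monic, hq_orth, hq_min⟩ := hq
  have hqn : q.degree < (n + 1 : ℕ) := by
    refine (hq_min p hp.monic.ne_zero hp.isOrthogonalBelow).trans_lt ?_
    rw [degree_eq_natDegree hp.monic.ne_zero, hp.natDegree_eq]
    exact_mod_cast n.lt_succ_self
  have hqp := hp.eq_C_coeff_mul hμ hr hq_orth hqn
  have hlead := congrArg leadingCoeff hqp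
  rw [hq_monic, leadingCoeff_mul, leadingCoeff_C, hp.monic, mul_one] at hlead
  rw [hqp, ← hlead, C_1, one_mul]

end IsNormalOrthogonal

end Orthogonality

/-! ### Orthonormal polynomials -/

section Bessel

variable {α : Type*} [MeasurableSpace α] {μ : Measure α}

theorem inner_memLp_toLp {f g : α → ℂ} (hf : MemLp f 2 μ) (hg : MemLp g 2 μ) :
    inner ℂ (hf.toLp f) (hg.toLp g) = ∫ x, starRingEnd ℂ (f x) * g x ∂μ := by
  rw [L2.inner_def]
  refine integral_congr_ae ?_
  filter_upwards [hf.coeFn_toLp, hg.coeFn_toLp] with x hfx hgx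
  rw [hfx, hgx, RCLike.inner_apply, mul_comm]

theorem norm_memLp_toLp_sq {f : α → ℂ} (hf : MemLp f 2 μ) :
    ‖hf.toLp f‖ ^ 2 = ∫ x, ‖f x‖ ^ 2 ∂μ := by
  have hinner := inner_self_eq_norm_sq_to_K (𝕜 := ℂ) (hf.toLp f)
  rw [inner_memLp_toLp] at hinner
  simp_rw [Complex.conj_mul', ← Complex.ofReal_pow] at hinner
  rw [integral_complex_ofReal] at hinner
  rw [← RCLike.ofReal_pow] at hinner
  exact RCLike.ofReal_injective hinner.symm

theorem sum_norm_sq_integral_conj_mul_le {ι : Type*} [DecidableEq ι] {v : ι → α → ℂ} {f : α → ℂ}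
    (hv : ∀ i, MemLp (v i) 2 μ)
    (horth : ∀ i j, ∫ x, starRingEnd ℂ (v i x) * v j x ∂μ = if i = j then 1 else 0)
    (hf : MemLp f 2 μ) (s : Finset ι) :
    ∑ i ∈ s, ‖∫ x, starRingEnd ℂ (v i x) * f x ∂μ‖ ^ 2 ≤ ∫ x, ‖f x‖ ^ 2 ∂μ := by
  have hortho : Orthonormal ℂ fun i => (hv i).toLp (v i) :=
    orthonormal_iff_ite.2 fun i j => by rw [inner_memLp_toLp, horth]
  simpa only [inner_memLp_toLp, norm_memLp_toLp_sq] using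
    hortho.sum_inner_products_le (hf.toLp f) (s := s)

end Bessel

/-- A real polynomial regarded as a polynomial with complex coefficients. -/
noncomputable abbrev complexify (p : ℝ[X]) : ℂ[X] := p.map (algebraMap ℝ ℂ)

theorem eval_complexify_ofReal (p : ℝ[X]) (x : ℝ) :
    (complexify p).eval (x : ℂ) = (p.eval x : ℝ) := by
  rw [← Complex.coe_algebraMap, eval_map_apply]

theorem leadingCoeff_complexify (p : ℝ[X]) : (complexify p).leadingCoeff = (p.leadingCoeff : ℂ) :=
  leadingCoeff_map _

/-- The `n`th monic orthogonal polynomial, written `L_n` in the literature: the orthonormal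
polynomial `l n` divided by its leading coefficient, with complex coefficients. -/
noncomputable def monicOrthogonal (l : ℕ → ℝ[X]) (n : ℕ) : ℂ[X] :=
  C ((l n).leadingCoeff : ℂ)⁻¹ * complexify (l n)

theorem memLp_two_of_continuousOn_msupp {μ : Measure ℝ} [IsFiniteMeasureOnCompacts μ]
    (hμ : IsCompact (msupp μ)) {g : ℝ → ℂ} (hg : ContinuousOn g (msupp μ)) : MemLp g 2 μ :=
  (memLp_two_iff_integrable_sq_norm
    (integrable_of_continuousOn_msupp hμ hg).aestronglyMeasurable).2
    (integrable_of_continuousOn_msupp hμ (hg.norm.pow 2))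

theorem integrable_eval_mul_eval {μ : Measure ℝ} [IsFiniteMeasureOnCompacts μ]
    (hμ : IsCompact (msupp μ)) (p q : ℂ[X]) :
    Integrable (fun x : ℝ => p.eval (x : ℂ) * q.eval (x : ℂ)) μ :=
  integrable_of_continuousOn_msupp hμ
    ((continuousOn_eval_ofReal p _).mul (continuousOn_eval_ofReal q _))

namespace IsOrthonormalPolys

variable {μ : Measure ℝ} {l : ℕ → ℝ[X]}

theorem leadingCoeff_ne_zero (hl : IsOrthonormalPolys μ l) (n : ℕ) :
    ((l n).leadingCoeff : ℂ) ≠ 0 :=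
  Complex.ofReal_ne_zero.2 (hl.leadingCoeff_pos n).ne'

theorem degree_complexify (hl : IsOrthonormalPolys μ l) (n : ℕ) :
    (complexify (l n)).degree = n := by
  rw [degree_map, degree_eq_natDegree (Polynomial.leadingCoeff_ne_zero.1
    (hl.leadingCoeff_pos n).ne'), hl.natDegree_eq]

theorem monic_monicOrthogonal (hl : IsOrthonormalPolys μ l) (n : ℕ) :
    (monicOrthogonal l n).Monic := by
  rw [Monic, monicOrthogonal, leadingCoeff_mul, leadingCoeff_C, leadingCoeff_complexify,
    inv_mul_cancel₀ (hl.leadingCoeff_ne_zero n)]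

theorem natDegree_monicOrthogonal (hl : IsOrthonormalPolys μ l) (n : ℕ) :
    (monicOrthogonal l n).natDegree = n := by
  rw [monicOrthogonal, natDegree_C_mul (inv_ne_zero (hl.leadingCoeff_ne_zero n)), natDegree_map,
    hl.natDegree_eq]

theorem integral_complexify_mul (hl : IsOrthonormalPolys μ l) (m n : ℕ) :
    ∫ x : ℝ, (complexify (l m)).eval (x : ℂ) * (complexify (l n)).eval (x : ℂ) ∂μ =
      if m = n then 1 else 0 := by
  simp_rw [eval_complexify_ofReal, ← Complex.ofReal_mul]
  rw [integral_complex_ofReal, hl.orthonormal]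
  split_ifs <;> simp

theorem span_complexify (hl : IsOrthonormalPolys μ l) (n : ℕ) :
    Submodule.span ℂ ((fun i => complexify (l i)) '' Iio n) = degreeLT ℂ n :=
  Polynomial.Sequence.span_degreeLT
    { elems' := fun i => complexify (l i), degree_eq' := hl.degree_complexify } fun i _ => by
      simpa [leadingCoeff_complexify] using hl.leadingCoeff_ne_zero i

theorem isOrthogonalBelow_complexify [IsFiniteMeasureOnCompacts μ] (hl : IsOrthonormalPolys μ l)
    (hμ : IsCompact (msupp μ)) (n : ℕ) :
    IsOrthogonalBelow μ (fun _ => 1) n (complexify (l n)) := by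
  intro p hp
  simp only [mul_one]
  rw [← mem_degreeLT, ← hl.span_complexify] at hp
  induction hp using Submodule.span_induction with
  | mem p hp =>
    obtain ⟨i, hi, rfl⟩ := hp
    rw [hl.integral_complexify_mul, if_neg (mem_Iio.1 hi).ne]
  | zero => simp only [eval_zero, zero_mul, integral_zero]
  | add p q _ _ hp hq =>
    simp only [eval_add, add_mul]
    rw [integral_add (integrable_eval_mul_eval hμ _ _) (integrable_eval_mul_eval hμ _ _), hp, hq,
      add_zero]
  | smul k p _ hp => simp only [eval_smul, smul_eq_mul, mul_assoc, integral_const_mul, hp, mul_zero]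

theorem isOrthogonalBelow_monicOrthogonal [IsFiniteMeasureOnCompacts μ]
    (hl : IsOrthonormalPolys μ l) (hμ : IsCompact (msupp μ)) (n : ℕ) :
    IsOrthogonalBelow μ (fun _ => 1) n (monicOrthogonal l n) := by
  intro p hp
  simp only [monicOrthogonal, eval_mul, eval_C, mul_left_comm _ (_⁻¹), mul_assoc]
  rw [integral_const_mul]
  simpa [mul_assoc] using Or.inr (hl.isOrthogonalBelow_complexify hμ n p hp)

theorem eq_zero_of_isOrthogonalBelow [IsFiniteMeasureOnCompacts μ] (hl : IsOrthonormalPolys μ l)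
    (hμ : IsCompact (msupp μ)) {n : ℕ} {q : ℂ[X]} (hqn : q.degree < n)
    (hq : IsOrthogonalBelow μ (fun _ => 1) n q) : q = 0 := by
  induction n generalizing q with
  | zero => simpa using hqn
  | succ n ih =>
    have hnormal : IsNormalOrthogonal μ (fun _ => 1) n (monicOrthogonal l n) :=
      ⟨hl.monic_monicOrthogonal n, hl.natDegree_monicOrthogonal n,
        hl.isOrthogonalBelow_monicOrthogonal hμ n, fun _ => ih⟩
    have hqL := hnormal.eq_C_coeff_mul hμ continuousOn_const (hq.mono n.le_succ) hqn
    have hzero := hq (complexify (l n)) (by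
      rw [hl.degree_complexify]
      exact_mod_cast n.lt_succ_self)
    rw [monicOrthogonal, ← mul_assoc, ← C_mul] at hqL
    rw [hqL] at hzero
    simp only [eval_mul, eval_C, mul_left_comm _ (_ * _⁻¹), mul_one] at hzero
    rw [integral_const_mul, hl.integral_complexify_mul, if_pos rfl, mul_one] at hzero
    rw [hqL, hzero, C_0, zero_mul]

theorem isNormalOrthogonal_monicOrthogonal [IsFiniteMeasureOnCompacts μ]
    (hl : IsOrthonormalPolys μ l) (hμ : IsCompact (msupp μ)) (n : ℕ) :
    IsNormalOrthogonal μ (fun _ => 1) n (monicOrthogonal l n) :=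
  ⟨hl.monic_monicOrthogonal n, hl.natDegree_monicOrthogonal n,
    hl.isOrthogonalBelow_monicOrthogonal hμ n, fun _ => hl.eq_zero_of_isOrthogonalBelow hμ⟩

theorem monicOrthogonal_zero (hl : IsOrthonormalPolys μ l) : monicOrthogonal l 0 = 1 :=
  (hl.monic_monicOrthogonal 0).natDegree_eq_zero.1 (hl.natDegree_monicOrthogonal 0)

theorem leadingCoeff_mul_eval_monicOrthogonal (hl : IsOrthonormalPolys μ l) (n : ℕ) (z : ℂ) :
    ((l n).leadingCoeff : ℂ) * (monicOrthogonal l n).eval z = (complexify (l n)).eval z := by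
  rw [monicOrthogonal, eval_mul, eval_C, mul_inv_cancel_left₀ (hl.leadingCoeff_ne_zero n)]

end IsOrthonormalPolys

section Green

variable {μ : Measure ℝ} {l : ℕ → ℝ[X]}

/-- The Green function `∫ l_m(x) l_n(x) / (z - x) dμ(x)`, that is, the `(m, n)` matrix entry of the
resolvent at `z` of the Jacobi operator of the orthonormal polynomials `l`. -/
noncomputable def greenFunction (μ : Measure ℝ) (l : ℕ → ℝ[X]) (m n : ℕ) (z : ℂ) : ℂ :=
  secondKind μ (fun _ => 1) (complexify (l m) * complexify (l n)) z

theorem greenFunction_eq_integral (m n : ℕ) (z : ℂ) : greenFunction μ l m n z =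
    ∫ x : ℝ, (l n).eval x * ((complexify (l m)).eval (x : ℂ) / (z - x)) ∂μ := by
  unfold greenFunction secondKind
  simp only [eval_mul, mul_one, eval_complexify_ofReal]
  refine integral_congr_ae (.of_forall fun x => ?_)
  ring_nf

theorem IsOrthonormalPolys.greenFunction_eq_eval_mul_secondKind [IsFiniteMeasureOnCompacts μ]
    (hl : IsOrthonormalPolys μ l) (hμ : IsCompact (msupp μ)) {m n : ℕ} (hmn : m ≤ n) {z : ℂ}
    (hz : z ∉ msuppC μ) : greenFunction μ l m n z =
      (complexify (l m)).eval z * secondKind μ (fun _ => 1) (complexify (l n)) z := by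
  rw [(hl.isOrthogonalBelow_complexify hμ n).eval_mul_secondKind hμ continuousOn_const _ hz,
    greenFunction]
  rw [hl.degree_complexify]
  exact_mod_cast Nat.lt_succ_of_le hmn

theorem IsOrthonormalPolys.sum_norm_sq_greenFunction_le [IsFiniteMeasureOnCompacts μ]
    (hl : IsOrthonormalPolys μ l) (hμ : IsCompact (msupp μ)) {z : ℂ} {δ : ℝ} (hδ : 0 < δ)
    (hz : ∀ x ∈ msupp μ, δ ≤ ‖z - x‖) (n : ℕ) (s : Finset ℕ) :
    ∑ i ∈ s, ‖greenFunction μ l n i z‖ ^ 2 ≤ (1 / δ) ^ 2 := by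
  have hcont : ContinuousOn (fun x : ℝ => (complexify (l n)).eval (x : ℂ) / (z - x)) (msupp μ) :=
    (continuousOn_eval_ofReal _ _).div (by fun_prop)
      fun x hx => norm_pos_iff.1 (hδ.trans_le (hz x hx))
  have hbessel := sum_norm_sq_integral_conj_mul_le
    (fun i => memLp_two_of_continuousOn_msupp hμ (continuousOn_eval_ofReal (complexify (l i)) _))
    (fun i j => by
      simp only [eval_complexify_ofReal, Complex.conj_ofReal]
      simpa only [eval_complexify_ofReal] using hl.integral_complexify_mul i j)
    (memLp_two_of_continuousOn_msupp hμ hcont) s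
  simp only [eval_complexify_ofReal, Complex.conj_ofReal] at hbessel hcont
  simp only [greenFunction_eq_integral, eval_complexify_ofReal]
  refine hbessel.trans ?_
  calc ∫ x : ℝ, ‖(((l n).eval x : ℝ) : ℂ) / (z - x)‖ ^ 2 ∂μ
      ≤ ∫ x : ℝ, (1 / δ) ^ 2 * ((l n).eval x * (l n).eval x) ∂μ := by
        refine integral_mono_ae (integrable_of_continuousOn_msupp hμ (hcont.norm.pow 2))
          (integrable_of_continuousOn_msupp hμ (by fun_prop)) ?_
        filter_upwards [ae_mem_msupp μ] with x hx
        have hle := hz x hx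
        rw [norm_div, Complex.norm_real, div_pow, Real.norm_eq_abs, sq_abs, ← pow_two, div_pow,
          one_pow, div_mul_eq_mul_div, one_mul]
        gcongr
    _ = (1 / δ) ^ 2 := by rw [integral_const_mul, hl.orthonormal, if_pos rfl, mul_one]

theorem X_divByMonic_X_sub_C (z : ℂ) : (X : ℂ[X]) /ₘ (X - C z) = 1 :=
  (div_modByMonic_unique 1 (C z) (monic_X_sub_C z) ⟨by ring, by
    rw [degree_X_sub_C]
    exact degree_C_le.trans_lt zero_lt_one⟩).1

theorem IsOrthonormalPolys.mul_greenFunction [IsFiniteMeasureOnCompacts μ]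
    (hl : IsOrthonormalPolys μ l) (hμ : IsCompact (msupp μ)) (m n : ℕ) {z : ℂ} (hz : z ∉ msuppC μ) :
    z * greenFunction μ l m n z =
      secondKind μ (fun _ => 1) (X * (complexify (l m) * complexify (l n))) z +
        if m = n then 1 else 0 := by
  have hX := eval_mul_secondKind (r := fun _ => 1) hμ continuousOn_const X
    (complexify (l m) * complexify (l n)) hz
  simpa only [eval_X, X_divByMonic_X_sub_C, eval_one, one_mul, mul_one, eval_mul,
    hl.integral_complexify_mul, greenFunction] using hX

end Green

namespace IsM01

variable {μ : Measure ℝ} {l : ℕ → ℝ[X]} {a b : ℕ → ℝ}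

theorem X_mul_complexify (hM : IsM01 μ l a b) (n : ℕ) :
    X * complexify (l (n + 1)) = C (a (n + 2) : ℂ) * complexify (l (n + 2)) +
      C (b (n + 1) : ℂ) * complexify (l (n + 1)) + C (a (n + 1) : ℂ) * complexify (l n) := by
  have hrec := congrArg complexify (hM.recurrence n)
  simpa [smul_eq_C_mul] using hrec

theorem mul_greenFunction [IsFiniteMeasureOnCompacts μ] (hM : IsM01 μ l a b)
    (hμ : IsCompact (msupp μ)) (m n : ℕ) {z : ℂ} (hz : z ∉ msuppC μ) :
    z * greenFunction μ l m (n + 1) z = a (n + 2) * greenFunction μ l m (n + 2) z +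
      b (n + 1) * greenFunction μ l m (n + 1) z + a (n + 1) * greenFunction μ l m n z +
        if m = n + 1 then 1 else 0 := by
  rw [hM.onp.mul_greenFunction hμ m (n + 1) hz, mul_left_comm, hM.X_mul_complexify, mul_add,
    mul_add, secondKind_add hμ continuousOn_const _ _ hz,
    secondKind_add hμ continuousOn_const _ _ hz]
  simp only [mul_left_comm _ (C _), secondKind_C_mul, greenFunction]

theorem leadingCoeff_eq (hM : IsM01 μ l a b) (n : ℕ) :
    (l n).leadingCoeff = a (n + 1) * (l (n + 1)).leadingCoeff := by
  have hlead : ∀ k, (l k).coeff k = (l k).leadingCoeff := fun k => by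
    rw [leadingCoeff, hM.onp.natDegree_eq]
  have hzero : ∀ k j, k < j → (l k).coeff j = 0 := fun k j hkj =>
    coeff_eq_zero_of_natDegree_lt ((hM.onp.natDegree_eq k).trans_lt hkj)
  cases n with
  | zero =>
    have hcoeff := congrArg (fun p : ℝ[X] => p.coeff 1) hM.recurrence_zero
    simpa only [coeff_X_mul, coeff_add, coeff_smul, smul_eq_mul, hlead, hzero 0 1 one_pos,
      mul_zero, add_zero] using hcoeff
  | succ n =>
    have hcoeff := congrArg (fun p : ℝ[X] => p.coeff (n + 2)) (hM.recurrence n)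
    simpa only [coeff_X_mul, coeff_add, coeff_smul, smul_eq_mul, hlead,
      hzero (n + 1) (n + 2) (by lia), hzero n (n + 2) (by lia), mul_zero, add_zero] using hcoeff

theorem leadingCoeff_eq_ofReal (hM : IsM01 μ l a b) (n : ℕ) :
    ((l n).leadingCoeff : ℂ) = a (n + 1) * (l (n + 1)).leadingCoeff := by
  rw [hM.leadingCoeff_eq, Complex.ofReal_mul]

theorem eval_monicOrthogonal_one (hM : IsM01 μ l a b) (z : ℂ) :
    (monicOrthogonal l 1).eval z = (z - b 0) * (monicOrthogonal l 0).eval z := by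
  have hrec : z * (complexify (l 0)).eval z =
      a 1 * (complexify (l 1)).eval z + b 0 * (complexify (l 0)).eval z := by
    simpa [smul_eq_C_mul] using congrArg (fun p => (complexify p).eval z) hM.recurrence_zero
  have hlead := hM.leadingCoeff_eq_ofReal 0
  refine mul_left_cancel₀ (hM.onp.leadingCoeff_ne_zero 0) ?_
  simp only [← hM.onp.leadingCoeff_mul_eval_monicOrthogonal] at hrec
  linear_combination (monicOrthogonal l 1).eval z * hlead - hrec

theorem eval_monicOrthogonal_add_two (hM : IsM01 μ l a b) (n : ℕ) (z : ℂ) :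
    (monicOrthogonal l (n + 2)).eval z = (z - b (n + 1)) * (monicOrthogonal l (n + 1)).eval z -
      a (n + 1) ^ 2 * (monicOrthogonal l n).eval z := by
  have hrec := congrArg (eval z) (hM.X_mul_complexify n)
  simp only [eval_add, eval_mul, eval_X, eval_C, ← hM.onp.leadingCoeff_mul_eval_monicOrthogonal]
    at hrec
  refine mul_left_cancel₀ (hM.onp.leadingCoeff_ne_zero (n + 1)) ?_
  linear_combination (monicOrthogonal l (n + 2)).eval z * hM.leadingCoeff_eq_ofReal (n + 1) - hrec -
    a (n + 1) * (monicOrthogonal l n).eval z * hM.leadingCoeff_eq_ofReal n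

end IsM01

section Growth

theorem ne_zero_and_mul_norm_le_of_recurrence {p t γ : ℕ → ℂ} {Γ M : ℝ} (hM : 1 ≤ M)
    (hγ : ∀ n, ‖γ n‖ ≤ Γ) (ht : ∀ n, M + Γ ≤ ‖t n‖) (hp0 : p 0 ≠ 0) (hp1 : p 1 = t 0 * p 0)
    (hp : ∀ n, p (n + 2) = t (n + 1) * p (n + 1) - γ n * p n) (n : ℕ) :
    p n ≠ 0 ∧ M * ‖p n‖ ≤ ‖p (n + 1)‖ := by
  have hΓ : 0 ≤ Γ := (norm_nonneg _).trans (hγ 0)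
  induction n with
  | zero =>
    refine ⟨hp0, ?_⟩
    rw [hp1, norm_mul]
    gcongr
    linarith [ht 0]
  | succ n ih =>
    obtain ⟨hne, hle⟩ := ih
    have hmono : ‖p n‖ ≤ ‖p (n + 1)‖ := (le_mul_of_one_le_left (norm_nonneg _) hM).trans hle
    refine ⟨norm_pos_iff.1 ((norm_pos_iff.2 hne).trans_le hmono), ?_⟩
    calc M * ‖p (n + 1)‖ = (M + Γ) * ‖p (n + 1)‖ - Γ * ‖p (n + 1)‖ := by ring
      _ ≤ ‖t (n + 1)‖ * ‖p (n + 1)‖ - ‖γ n‖ * ‖p n‖ := by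
        gcongr
        exacts [ht _, hγ n]
      _ ≤ ‖p (n + 2)‖ := by
        rw [hp, ← norm_mul, ← norm_mul]
        exact norm_sub_norm_le _ _

theorem IsM01.tendsto_monicOrthogonal_ratio_cobounded {μ : Measure ℝ} {l : ℕ → ℝ[X]} {a b : ℕ → ℝ}
    (hM : IsM01 μ l a b) :
    Tendsto (fun q : ℕ × ℂ => (monicOrthogonal l (q.1 + 1)).eval q.2 /
      (monicOrthogonal l q.1).eval q.2) (atTop ×ˢ Bornology.cobounded ℂ)
      (Bornology.cobounded ℂ) := by
  obtain ⟨Γ, hΓ⟩ := (hM.tendsto_a.pow 2).norm.bddAbove_range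
  obtain ⟨β, hβ⟩ := hM.tendsto_b.norm.bddAbove_range
  rw [← tendsto_norm_atTop_iff_cobounded, tendsto_atTop]
  intro M
  have hlarge : ∀ᶠ z in Bornology.cobounded ℂ, max M 1 + Γ + β ≤ ‖z‖ :=
    tendsto_norm_cobounded_atTop.eventually_ge_atTop _
  filter_upwards [tendsto_snd.eventually hlarge] with ⟨n, z⟩ hz
  obtain ⟨hne, hle⟩ := ne_zero_and_mul_norm_le_of_recurrence (t := fun k => z - b k) (Γ := Γ)
    (γ := fun k => a (k + 1) ^ 2) (p := fun k => (monicOrthogonal l k).eval z) (le_max_right M 1)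
    (fun k => by simpa using hΓ ⟨k + 1, rfl⟩)
    (fun k => by
      have hbk : ‖(b k : ℂ)‖ ≤ β := by simpa using hβ ⟨k, rfl⟩
      linarith [norm_sub_norm_le z (b k : ℂ)])
    (by simp [hM.onp.monicOrthogonal_zero]) (hM.eval_monicOrthogonal_one z)
    (fun k => hM.eval_monicOrthogonal_add_two k z) n
  rw [norm_div, le_div_iff₀ (norm_pos_iff.2 hne)]
  exact (mul_le_mul_of_nonneg_right (le_max_left M 1) (norm_nonneg _)).trans hle

end Growth

/-! ### Limits of the Green function -/

section FreeJacobi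

theorem eq_pow_mul_of_recurrence_of_tendsto_zero {u : ℕ → ℂ} {z lam : ℂ} (hlam0 : lam ≠ 0)
    (hlam1 : ‖lam‖ ≤ 1) (hlam : lam + lam⁻¹ = 2 * z)
    (hu : ∀ j, u (j + 2) = 2 * z * u (j + 1) - u j) (hlim : Tendsto u atTop (𝓝 0)) (j : ℕ) :
    u j = lam ^ j * u 0 := by
  -- The defect of `u` from being geometric gains a factor `lam⁻¹` at each step, yet tends to zero.
  have hdefect : ∀ i k, u (i + 1) - lam * u i = lam ^ k * (u (i + k + 1) - lam * u (i + k)) := by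
    intro i k
    induction k with
    | zero => simp
    | succ k ih =>
      rw [ih, ← add_assoc, hu, ← hlam]
      field_simp
      ring
  have hgeom : ∀ i, u (i + 1) = lam * u i := by
    intro i
    have hzero : Tendsto (fun k => lam ^ k * (u (i + k + 1) - lam * u (i + k))) atTop (𝓝 0) := by
      have hshift : Tendsto (fun k => i + k) atTop atTop :=
        tendsto_atTop_mono (Nat.le_add_left · i) tendsto_id
      refine squeeze_zero_norm (fun k => ?_)
        (a := fun k => ‖u (i + k + 1) - lam * u (i + k)‖) ?_
      · rw [norm_mul, norm_pow]
        exact mul_le_of_le_one_left (norm_nonneg _) (pow_le_one₀ (norm_nonneg _) hlam1)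
      · simpa using ((hlim.comp ((tendsto_add_atTop_nat 1).comp hshift)).sub
          ((hlim.comp hshift).const_mul lam)).norm
    exact sub_eq_zero.1 (tendsto_nhds_unique
      (tendsto_const_nhds.congr fun k => hdefect i k) hzero)
  induction j with
  | zero => simp
  | succ j ih => rw [hgeom, ih, pow_succ', mul_assoc]

theorem norm_lt_one_and_eq_of_free_recurrence {u : ℤ → ℂ} {z lam : ℂ}
    (hu : ∀ j, z * u j = (u (j + 1) + u (j - 1)) / 2 + if j = 0 then 1 else 0)
    (hsum : Summable fun j => ‖u j‖ ^ 2) (hlam0 : lam ≠ 0) (hlam1 : ‖lam‖ ≤ 1)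
    (hlam : lam + lam⁻¹ = 2 * z) :
    ‖lam‖ < 1 ∧ u 0 * (z - lam) = 1 ∧ u 1 = lam * u 0 := by
  have htendsto : ∀ s : ℕ → ℤ, Function.Injective s → Tendsto (fun j => u (s j)) atTop (𝓝 0) := by
    intro s hs
    have hsq := (hsum.comp_injective hs).tendsto_atTop_zero.sqrt
    simp only [Function.comp_def, Real.sqrt_sq (norm_nonneg _), Real.sqrt_zero] at hsq
    exact tendsto_zero_iff_norm_tendsto_zero.2 hsq
  have hpos := htendsto (fun j => j) Nat.cast_injective
  have hneg := htendsto (fun j => -j) (neg_injective.comp Nat.cast_injective)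
  have hupos := eq_pow_mul_of_recurrence_of_tendsto_zero hlam0 hlam1 hlam (fun j => by
    have h := hu (j + 1)
    rw [if_neg (by lia), add_sub_cancel_right, add_assoc, one_add_one_eq_two] at h
    push_cast
    linear_combination -2 * h) hpos
  have huneg := eq_pow_mul_of_recurrence_of_tendsto_zero hlam0 hlam1 hlam (fun j => by
    have h := hu (-(j + 1))
    rw [if_neg (by lia), show -((j : ℤ) + 1) + 1 = -j by ring,
      show -((j : ℤ) + 1) - 1 = -(j + 2) by ring] at h
    push_cast
    linear_combination -2 * h) hneg
  have hu1 : u 1 = lam * u 0 := by simpa using hupos 1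
  have hresolvent : u 0 * (z - lam) = 1 := by
    have hum1 : u (-1) = lam * u 0 := by simpa using huneg 1
    have h := hu 0
    rw [if_pos rfl, zero_add, zero_sub, hu1, hum1] at h
    linear_combination h
  refine ⟨lt_of_le_of_ne hlam1 fun hone => ?_, hresolvent, hu1⟩
  have hnorm : Tendsto (fun j : ℕ => ‖u j‖) atTop (𝓝 ‖u 0‖) :=
    tendsto_const_nhds.congr fun j => by
      rw [hupos, norm_mul, norm_pow, hone, one_pow, one_mul, Nat.cast_zero]
  have hu0 : u 0 = 0 :=
    norm_eq_zero.1 (tendsto_nhds_unique hnorm (tendsto_zero_iff_norm_tendsto_zero.1 hpos))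
  rw [hu0, zero_mul] at hresolvent
  exact zero_ne_one hresolvent

end FreeJacobi

section GreenLimit

variable {μ : Measure ℝ} [IsFiniteMeasureOnCompacts μ] {l : ℕ → ℝ[X]} {a b : ℕ → ℝ} {z : ℂ}

theorem exists_tendsto_ultrafilter_of_norm_le {ι : Type*} {U : Ultrafilter ι} {f : ι → ℂ}
    {C : ℝ} (hf : ∀ᶠ i in U, ‖f i‖ ≤ C) : ∃ y, Tendsto f U (𝓝 y) := by
  obtain ⟨y, -, hy⟩ := (isCompact_closedBall (0 : ℂ) C).ultrafilter_le_nhds (U.map f)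
    (le_principal_iff.2 (hf.mono fun i hi => by simpa using hi))
  exact ⟨y, hy⟩

/-- The entry of the Green function at `q = (n, z)` in row `n`, at signed distance `j` from the
diagonal. The offset `j` is an integer so that limits as `n → ∞` form a bi-infinite sequence; for
`n + j < 0` the column is truncated to `0`. -/
noncomputable def offDiagonalGreen (μ : Measure ℝ) (l : ℕ → ℝ[X]) (j : ℤ) (q : ℕ × ℂ) : ℂ :=
  greenFunction μ l q.1 (q.1 + j).toNat q.2

theorem IsOrthonormalPolys.exists_tendsto_offDiagonalGreen (hl : IsOrthonormalPolys μ l)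
    (hμ : IsCompact (msupp μ)) (hz : z ∉ msuppC μ) {U : Ultrafilter (ℕ × ℂ)}
    (hU : (U : Filter (ℕ × ℂ)) ≤ atTop ×ˢ 𝓝 z) :
    ∃ u : ℤ → ℂ, (∀ j, Tendsto (offDiagonalGreen μ l j) U (𝓝 (u j))) ∧
      Summable fun j => ‖u j‖ ^ 2 := by
  obtain ⟨δ, hδ, hdist⟩ := exists_forall_mem_ball_le_norm_sub_ofReal hz
  have hball : ∀ᶠ q : ℕ × ℂ in U, q.2 ∈ Metric.ball z δ :=
    hU (tendsto_snd.eventually (Metric.ball_mem_nhds z hδ))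
  have hbessel : ∀ s : Finset ℤ, ∀ᶠ q in U,
      ∑ j ∈ s, ‖offDiagonalGreen μ l j q‖ ^ 2 ≤ (1 / δ) ^ 2 := by
    intro s
    have hlarge : ∀ᶠ q : ℕ × ℂ in U, ∀ j ∈ s, 0 ≤ (q.1 : ℤ) + j := by
      rw [eventually_all_finset]
      intro j _
      filter_upwards [hU (tendsto_fst.eventually (eventually_ge_atTop (-j).toNat))] with q hq
      have : (-j).toNat ≤ q.1 := hq
      lia
    filter_upwards [hball, hlarge] with q hq hqs
    have hle := hl.sum_norm_sq_greenFunction_le hμ hδ (hdist q.2 hq) q.1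
      (s.image fun j => ((q.1 : ℤ) + j).toNat)
    rwa [Finset.sum_image fun i hi j hj hij => by
      have := hqs i hi
      have := hqs j hj
      lia] at hle
  have hexists : ∀ j, ∃ y, Tendsto (offDiagonalGreen μ l j) U (𝓝 y) := by
    refine fun j => exists_tendsto_ultrafilter_of_norm_le (C := 1 / δ) ?_
    filter_upwards [hbessel {j}] with q hq
    rw [Finset.sum_singleton] at hq
    exact (pow_le_pow_iff_left₀ (norm_nonneg _) (by positivity) two_ne_zero).1 hq
  choose u hu using hexists
  exact ⟨u, hu, summable_of_sum_le (fun _ => by positivity) fun s =>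
    le_of_tendsto (tendsto_finsetSum s fun j _ => (hu j).norm.pow 2) (hbessel s)⟩

theorem IsM01.free_recurrence_of_tendsto_offDiagonalGreen (hM : IsM01 μ l a b)
    (hμ : IsCompact (msupp μ)) (hz : z ∉ msuppC μ) {F : Filter (ℕ × ℂ)} [F.NeBot]
    (hF : F ≤ atTop ×ˢ 𝓝 z) {u : ℤ → ℂ}
    (hu : ∀ j, Tendsto (offDiagonalGreen μ l j) F (𝓝 (u j))) (j : ℤ) :
    z * u j = (u (j + 1) + u (j - 1)) / 2 + if j = 0 then 1 else 0 := by
  have hfst : Tendsto Prod.fst F atTop := tendsto_fst.mono_left hF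
  have hindex : ∀ k : ℤ, Tendsto (fun q : ℕ × ℂ => (q.1 + k).toNat) F atTop := fun k =>
    tendsto_atTop.2 fun N => (hfst.eventually (eventually_ge_atTop (N + (-k).toNat))).mono
      fun q hq => by lia
  have ha : ∀ k : ℤ, Tendsto (fun q : ℕ × ℂ => (a (q.1 + k).toNat : ℂ)) F (𝓝 (1 / 2)) := fun k => by
    simpa [Function.comp_def] using (Complex.continuous_ofReal.tendsto _).comp
      (hM.tendsto_a.comp (hindex k))
  have hb : Tendsto (fun q : ℕ × ℂ => (b (q.1 + j).toNat : ℂ)) F (𝓝 0) := by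
    simpa [Function.comp_def] using (Complex.continuous_ofReal.tendsto _).comp
      (hM.tendsto_b.comp (hindex j))
  have hleft := (tendsto_snd.mono_left hF).mul (hu j)
  have hright := ((((ha (j + 1)).mul (hu (j + 1))).add (hb.mul (hu j))).add
    ((ha j).mul (hu (j - 1)))).add_const (if j = 0 then 1 else 0)
  have heq := tendsto_nhds_unique_of_eventuallyEq hleft hright (by
    filter_upwards [hF (tendsto_snd.eventually ((isOpen_compl_msuppC μ).mem_nhds hz)),
      hfst.eventually (eventually_ge_atTop (1 + (-j).toNat))] with q hq hqj
    obtain ⟨k, hk⟩ : ∃ k : ℕ, (q.1 : ℤ) + j = k + 1 := ⟨(q.1 + j - 1).toNat, by lia⟩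
    have hrec := hM.mul_greenFunction hμ q.1 k hq
    have hdiag : q.1 = k + 1 ↔ j = 0 := by lia
    rw [if_congr hdiag rfl rfl] at hrec
    simp only [offDiagonalGreen]
    rwa [← add_assoc, ← add_sub_assoc, hk, show ((k : ℤ) + 1).toNat = k + 1 by lia,
      show ((k : ℤ) + 1 + 1).toNat = k + 2 by lia, show ((k : ℤ) + 1 - 1).toNat = k by lia])
  linear_combination heq

theorem IsM01.exists_tendsto_greenFunction (hM : IsM01 μ l a b) (hμ : IsCompact (msupp μ))
    (hz : z ∉ msuppC μ) {lam : ℂ} (hlam0 : lam ≠ 0) (hlam1 : ‖lam‖ ≤ 1)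
    (hlam : lam + lam⁻¹ = 2 * z) {U : Ultrafilter (ℕ × ℂ)}
    (hU : (U : Filter (ℕ × ℂ)) ≤ atTop ×ˢ 𝓝 z) :
    ∃ g : ℂ, ‖lam‖ < 1 ∧ g * (z - lam) = 1 ∧
      Tendsto (fun q : ℕ × ℂ => greenFunction μ l q.1 q.1 q.2) U (𝓝 g) ∧
      Tendsto (fun q : ℕ × ℂ => greenFunction μ l q.1 (q.1 + 1) q.2) U (𝓝 (lam * g)) := by
  obtain ⟨u, hu, hsum⟩ := hM.onp.exists_tendsto_offDiagonalGreen hμ hz hU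
  obtain ⟨hlt, hu0, hu1⟩ := norm_lt_one_and_eq_of_free_recurrence
    (hM.free_recurrence_of_tendsto_offDiagonalGreen hμ hz hU hu) hsum hlam0 hlam1 hlam
  refine ⟨u 0, hlt, hu0, (hu 0).congr fun q => ?_, (hu1 ▸ hu 1).congr fun q => ?_⟩
  · simp [offDiagonalGreen]
  · simp only [offDiagonalGreen]
    rw [show ((q.1 : ℤ) + 1).toNat = q.1 + 1 by lia]

theorem IsM01.realCut_subset_msuppC (hM : IsM01 μ l a b) (hμ : IsCompact (msupp μ)) :
    realCut ⊆ msuppC μ := by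
  rintro _ ⟨x, hx, rfl⟩
  by_contra hxμ
  obtain ⟨-, hlt, -⟩ := hM.exists_tendsto_greenFunction hμ hxμ
    (lam := Complex.exp (Real.arccos x * Complex.I)) (Complex.exp_ne_zero _)
    (Complex.norm_exp_ofReal_mul_I _).le
    (by rw [← Complex.exp_neg, ← neg_mul, ← Complex.two_cos, ← Complex.ofReal_cos,
      Real.cos_arccos hx.1 hx.2])
    (Ultrafilter.of_le (atTop ×ˢ 𝓝 (x : ℂ)))
  exact hlt.ne (Complex.norm_exp_ofReal_mul_I _)

theorem IsM01.notMem_realCut (hM : IsM01 μ l a b) (hμ : IsCompact (msupp μ)) (hz : z ∉ msuppC μ) :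
    z ∉ realCut :=
  fun h => hz (hM.realCut_subset_msuppC hμ h)

theorem norm_inv_phi_lt_one (hz : z ∉ realCut) : ‖(phi z)⁻¹‖ < 1 := by
  rw [norm_inv]
  exact inv_lt_one_of_one_lt₀ (one_lt_norm_phi hz)

theorem IsM01.tendsto_greenFunction_ultrafilter (hM : IsM01 μ l a b) (hμ : IsCompact (msupp μ))
    (hz : z ∉ msuppC μ) {U : Ultrafilter (ℕ × ℂ)}
    (hU : (U : Filter (ℕ × ℂ)) ≤ atTop ×ˢ 𝓝 z) :
    Tendsto (fun q : ℕ × ℂ => greenFunction μ l q.1 q.1 q.2) U (𝓝 (1 / sqrtB z)) ∧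
      Tendsto (fun q : ℕ × ℂ => greenFunction μ l q.1 (q.1 + 1) q.2) U
        (𝓝 (1 / (phi z * sqrtB z))) := by
  have hcut := hM.notMem_realCut hμ hz
  have hinv := sub_sqrtB_eq_inv_phi (ne_zero_of_notMem_realCut hcut)
  obtain ⟨g, -, hg, hdiag, hoff⟩ := hM.exists_tendsto_greenFunction hμ hz
    (inv_ne_zero (phi_ne_zero hcut)) (norm_inv_phi_lt_one hcut).le
    (by rw [inv_inv, ← hinv, phi]; ring) hU
  have hg' : g = 1 / sqrtB z := by
    rw [eq_div_iff (sqrtB_ne_zero hcut), ← hg, ← hinv, sub_sub_cancel]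
  rw [hg'] at hdiag hoff
  exact ⟨hdiag, by rwa [inv_mul_eq_div, div_div, mul_comm] at hoff⟩

theorem IsM01.tendstoContinuouslyOn_greenFunction_self (hM : IsM01 μ l a b)
    (hμ : IsCompact (msupp μ)) :
    TendstoContinuouslyOn (fun n => greenFunction μ l n n) (fun z => 1 / sqrtB z) atTop
      (msuppC μ)ᶜ := by
  intro z hz
  rw [tendsto_iff_ultrafilter]
  exact fun U hU => (hM.tendsto_greenFunction_ultrafilter hμ hz
    (hU.trans (prod_mono le_rfl nhdsWithin_le_nhds))).1

theorem IsM01.tendstoContinuouslyOn_greenFunction_succ (hM : IsM01 μ l a b)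
    (hμ : IsCompact (msupp μ)) :
    TendstoContinuouslyOn (fun n => greenFunction μ l n (n + 1))
      (fun z => 1 / (phi z * sqrtB z)) atTop (msuppC μ)ᶜ := by
  intro z hz
  rw [tendsto_iff_ultrafilter]
  exact fun U hU => (hM.tendsto_greenFunction_ultrafilter hμ hz
    (hU.trans (prod_mono le_rfl nhdsWithin_le_nhds))).2

end GreenLimit

/-! ### Christoffel and Geronimus transforms -/

section Transforms

variable {μ : Measure ℝ} {r : ℝ → ℂ} {n : ℕ} {p q : ℂ[X]} {c d : ℂ}

theorem monic_sub_C_mul (hq : q.Monic) (hpq : p.natDegree < q.natDegree) (k : ℂ) :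
    (q - C k * p).Monic :=
  hq.sub_of_left (degree_lt_degree ((natDegree_C_mul_le k p).trans_lt hpq))

theorem natDegree_sub_C_mul (hpq : p.natDegree < q.natDegree) (k : ℂ) :
    (q - C k * p).natDegree = q.natDegree :=
  natDegree_sub_eq_left_of_natDegree_lt ((natDegree_C_mul_le k p).trans_lt hpq)

theorem degree_X_sub_C_mul_lt (hp : p.degree < n) (c : ℂ) :
    ((X - C c) * p).degree < ((n + 1 : ℕ) : WithBot ℕ) := by
  rw [degree_mul, degree_X_sub_C, add_comm]
  push_cast
  exact WithBot.add_lt_add_right WithBot.one_ne_bot hp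

/-- The Christoffel transform of two consecutive orthogonal polynomials `p`, `q` of a measure: it
is orthogonal with respect to the measure multiplied by `x - c`. -/
noncomputable def christoffel (c : ℂ) (p q : ℂ[X]) : ℂ[X] :=
  (q - C (q.eval c / p.eval c) * p) /ₘ (X - C c)

theorem X_sub_C_mul_christoffel (hpc : p.eval c ≠ 0) (q : ℂ[X]) :
    (X - C c) * christoffel c p q = q - C (q.eval c / p.eval c) * p := by
  refine mul_divByMonic_eq_iff_isRoot.2 ?_
  rw [IsRoot, eval_sub, eval_mul, eval_C, div_mul_cancel₀ _ hpc, sub_self]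

theorem sub_mul_eval_christoffel (hpc : p.eval c ≠ 0) (q : ℂ[X]) (z : ℂ) :
    (z - c) * (christoffel c p q).eval z = q.eval z - q.eval c / p.eval c * p.eval z := by
  simpa only [eval_mul, eval_sub, eval_X, eval_C] using
    congrArg (eval z) (X_sub_C_mul_christoffel hpc q)

theorem secondKind_christoffel [IsFiniteMeasureOnCompacts μ] (hμ : IsCompact (msupp μ))
    (hr : ContinuousOn r (msupp μ)) (hpc : p.eval c ≠ 0) (q : ℂ[X]) {z : ℂ} (hz : z ∉ msuppC μ) :
    secondKind μ (fun x => (x - c) * r x) (christoffel c p q) z =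
      secondKind μ r q z - q.eval c / p.eval c * secondKind μ r p z := by
  rw [secondKind_sub_mul_weight, X_sub_C_mul_christoffel hpc, secondKind_sub_C_mul hμ hr _ _ _ hz]

theorem IsNormalOrthogonal.christoffel [IsFiniteMeasureOnCompacts μ]
    (hp : IsNormalOrthogonal μ r n p) (hq : IsNormalOrthogonal μ r (n + 1) q)
    (hμ : IsCompact (msupp μ)) (hr : ContinuousOn r (msupp μ)) (hpc : p.eval c ≠ 0) :
    IsNormalOrthogonal μ (fun x => (x - c) * r x) n (christoffel c p q) := by
  have hmul := X_sub_C_mul_christoffel hpc q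
  have hpq : p.natDegree < q.natDegree := by
    rw [hp.natDegree_eq, hq.natDegree_eq]
    exact n.lt_succ_self
  have hmonic : (_root_.christoffel c p q).Monic :=
    (monic_X_sub_C c).of_mul_monic_left (hmul ▸ monic_sub_C_mul hq.monic hpq _)
  refine ⟨hmonic, ?_, ?_, fun s hs hsorth => ?_⟩
  · have hdeg := natDegree_sub_C_mul hpq (q.eval c / p.eval c)
    rw [← hmul, (monic_X_sub_C c).natDegree_mul hmonic, natDegree_X_sub_C, hq.natDegree_eq] at hdeg
    omega
  · rw [isOrthogonalBelow_sub_mul_weight, hmul]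
    exact (hq.isOrthogonalBelow.mono n.le_succ).sub_C_mul hp.isOrthogonalBelow hμ hr _
  · have hsp := hp.eq_C_coeff_mul hμ hr ((isOrthogonalBelow_sub_mul_weight c).1 hsorth)
      (degree_X_sub_C_mul_lt hs c)
    have hcoeff : ((X - C c) * s).coeff n = 0 := by
      have heval := congrArg (eval c) hsp
      rw [eval_mul, eval_mul, eval_C, eval_sub, eval_X, eval_C, sub_self, zero_mul] at heval
      exact (mul_eq_zero.1 heval.symm).resolve_right hpc
    rw [hcoeff, C_0, zero_mul] at hsp
    exact (mul_eq_zero.1 hsp).resolve_left (X_sub_C_ne_zero c)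

/-- The Geronimus transform of two consecutive orthogonal polynomials `p`, `q` of the measure
`r dμ`: it is orthogonal with respect to `r dμ` divided by `x - d`. -/
noncomputable def geronimus (μ : Measure ℝ) (r : ℝ → ℂ) (d : ℂ) (p q : ℂ[X]) : ℂ[X] :=
  q - C (secondKind μ r q d / secondKind μ r p d) * p

theorem eval_geronimus (μ : Measure ℝ) (r : ℝ → ℂ) (d : ℂ) (p q : ℂ[X]) (z : ℂ) :
    (geronimus μ r d p q).eval z =
      q.eval z - secondKind μ r q d / secondKind μ r p d * p.eval z := by
  rw [geronimus, eval_sub, eval_mul, eval_C]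

variable [IsFiniteMeasureOnCompacts μ]

theorem secondKind_geronimus_self (hμ : IsCompact (msupp μ)) (hr : ContinuousOn r (msupp μ))
    (hd : d ∉ msuppC μ) (hpd : secondKind μ r p d ≠ 0) (q : ℂ[X]) :
    secondKind μ r (geronimus μ r d p q) d = 0 := by
  rw [geronimus, secondKind_sub_C_mul hμ hr _ _ _ hd, div_mul_cancel₀ _ hpd, sub_self]

theorem sub_mul_secondKind_geronimus (hμ : IsCompact (msupp μ)) (hr : ContinuousOn r (msupp μ))
    (hd : d ∉ msuppC μ) (hpd : secondKind μ r p d ≠ 0) (q : ℂ[X]) {z : ℂ} (hz : z ∉ msuppC μ) :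
    (z - d) * secondKind μ (fun x => r x / (x - d)) (geronimus μ r d p q) z =
      secondKind μ r q z - secondKind μ r q d / secondKind μ r p d * secondKind μ r p z := by
  rw [sub_mul_secondKind_div_weight hμ hr _ hd hz, secondKind_geronimus_self hμ hr hd hpd, sub_zero,
    geronimus, secondKind_sub_C_mul hμ hr _ _ _ hz]

theorem IsNormalOrthogonal.geronimus (hp : IsNormalOrthogonal μ r n p)
    (hq : IsNormalOrthogonal μ r (n + 1) q) (hμ : IsCompact (msupp μ))
    (hr : ContinuousOn r (msupp μ)) (hd : d ∉ msuppC μ) (hpd : secondKind μ r p d ≠ 0) :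
    IsNormalOrthogonal μ (fun x => r x / (x - d)) (n + 1) (geronimus μ r d p q) := by
  have hpq : p.natDegree < q.natDegree := by
    rw [hp.natDegree_eq, hq.natDegree_eq]
    exact n.lt_succ_self
  refine ⟨monic_sub_C_mul hq.monic hpq _, (natDegree_sub_C_mul hpq _).trans hq.natDegree_eq,
    (isOrthogonalBelow_div_weight_succ hμ hr hd).2
      ⟨(hq.isOrthogonalBelow.mono n.le_succ).sub_C_mul hp.isOrthogonalBelow hμ hr _,
        secondKind_geronimus_self hμ hr hd hpd q⟩,
    fun s hs hsorth => ?_⟩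
  obtain ⟨hs_orth, hs_zero⟩ := (isOrthogonalBelow_div_weight_succ hμ hr hd).1 hsorth
  have hsp := hp.eq_C_coeff_mul hμ hr hs_orth hs
  rw [hsp, secondKind_C_mul] at hs_zero
  rw [hsp, (mul_eq_zero.1 hs_zero).resolve_right hpd, C_0, zero_mul]

end Transforms

/-! ### Stability of ratio asymptotics -/

theorem phi_div_two_ne_zero {z : ℂ} (hz : z ∉ realCut) : phi z / 2 ≠ 0 :=
  div_ne_zero (phi_ne_zero hz) two_ne_zero

theorem one_div_two_mul_phi_ne_zero {z : ℂ} (hz : z ∉ realCut) : 1 / (2 * phi z) ≠ 0 :=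
  one_div_ne_zero (mul_ne_zero two_ne_zero (phi_ne_zero hz))

theorem dslope_phi_div_two_ne_zero {c z : ℂ} (hc : c ∉ realCut) (hz : z ∉ realCut) :
    dslope (fun w => phi w / 2) c z ≠ 0 := by
  refine dslope_ne_zero_of_injOn (Ω := realCutᶜ)
    (fun z hz w hw h => injOn_phi hz hw ((div_left_inj' two_ne_zero).1 h)) hc ?_ hz
  rw [((hasDerivAt_phi hc).div_const 2).deriv]
  exact div_ne_zero (div_ne_zero (phi_ne_zero hc) (sqrtB_ne_zero hc)) two_ne_zero

theorem dslope_one_div_two_mul_phi_ne_zero {d z : ℂ} (hd : d ∉ realCut) (hz : z ∉ realCut) :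
    dslope (fun w => 1 / (2 * phi w)) d z ≠ 0 := by
  have hφ := mul_ne_zero two_ne_zero (phi_ne_zero hd)
  refine dslope_ne_zero_of_injOn (Ω := realCutᶜ) (fun z hz w hw h => injOn_phi hz hw
    (mul_right_injective₀ two_ne_zero (by simpa only [one_div, inv_inj] using h))) hd ?_ hz
  simp only [one_div]
  rw [(((hasDerivAt_phi hd).const_mul 2).fun_inv hφ).deriv]
  exact div_ne_zero (neg_ne_zero.2 (mul_ne_zero two_ne_zero
    (div_ne_zero (phi_ne_zero hd) (sqrtB_ne_zero hd)))) (pow_ne_zero 2 hφ)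

theorem phi_div_two_ne_one_div_two_mul_phi {z w : ℂ} (hz : z ∉ realCut) (hw : w ∉ realCut) :
    phi z / 2 ≠ 1 / (2 * phi w) := by
  intro h
  refine phi_mul_phi_ne_one hz hw ?_
  have hφ := phi_ne_zero hw
  field_simp at h
  linear_combination h

section RatioAsymptotics

variable {μ : Measure ℝ} {r : ℝ → ℂ} {P : ℕ → ℂ[X]}

/-- The properties of the orthogonal polynomials `P n` of the complex measure `r dμ` that survive
multiplication and division of `r` by a linear factor: eventually all indices are normal, and the
ratios of consecutive polynomials and of consecutive functions of the second kind tend to `φ / 2`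
and `1 / (2φ)`. The sequence is only constrained for large indices. -/
structure HasRatioAsymptotics (μ : Measure ℝ) (r : ℝ → ℂ) (P : ℕ → ℂ[X]) : Prop where
  continuousOn_weight : ContinuousOn r (msupp μ)
  eventually_normal : ∀ᶠ n in atTop, IsNormalOrthogonal μ r n (P n)
  ratio : TendstoContinuouslyOn (fun n z => (P (n + 1)).eval z / (P n).eval z)
    (fun z => phi z / 2) atTop (msuppC μ)ᶜ
  ratio_secondKind : TendstoContinuouslyOn
    (fun n z => secondKind μ r (P (n + 1)) z / secondKind μ r (P n) z)
    (fun z => 1 / (2 * phi z)) atTop (msuppC μ)ᶜ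
  ratio_cobounded : Tendsto (fun q : ℕ × ℂ => (P (q.1 + 1)).eval q.2 / (P q.1).eval q.2)
    (atTop ×ˢ Bornology.cobounded ℂ) (Bornology.cobounded ℂ)

theorem tendsto_prod_succ_iff {X Y : Type*} {F : ℕ → X → Y} {l : Filter X} {m : Filter Y} :
    Tendsto (fun q : ℕ × X => F (q.1 + 1) q.2) (atTop ×ˢ l) m ↔
      Tendsto (fun q : ℕ × X => F q.1 q.2) (atTop ×ˢ l) m := by
  conv_rhs => rw [← map_add_atTop_eq_nat 1, prod_map_left]
  rw [tendsto_map'_iff]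
  rfl

namespace HasRatioAsymptotics

theorem congr {Q : ℕ → ℂ[X]} (hP : HasRatioAsymptotics μ r P) (hPQ : ∀ᶠ n in atTop, P n = Q n) :
    HasRatioAsymptotics μ r Q := by
  have hratio : ∀ᶠ n in atTop, P n = Q n ∧ P (n + 1) = Q (n + 1) :=
    hPQ.and ((tendsto_add_atTop_nat 1).eventually hPQ)
  have hprod : ∀ l : Filter ℂ, ∀ᶠ q : ℕ × ℂ in atTop ×ˢ l,
      P q.1 = Q q.1 ∧ P (q.1 + 1) = Q (q.1 + 1) := fun l => tendsto_fst.eventually hratio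
  refine ⟨hP.continuousOn_weight, ?_, hP.ratio.congr' fun z _ => ?_,
    hP.ratio_secondKind.congr' fun z _ => ?_, hP.ratio_cobounded.congr' ?_⟩
  · filter_upwards [hP.eventually_normal, hPQ] with n hn hPQn
    rwa [← hPQn]
  all_goals
    filter_upwards [hprod _] with q hq
    rw [hq.1, hq.2]

theorem of_succ (hr : ContinuousOn r (msupp μ))
    (hnormal : ∀ᶠ n in atTop, IsNormalOrthogonal μ r (n + 1) (P (n + 1)))
    (hratio : TendstoContinuouslyOn (fun n z => (P (n + 2)).eval z / (P (n + 1)).eval z)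
      (fun z => phi z / 2) atTop (msuppC μ)ᶜ)
    (hratio_secondKind : TendstoContinuouslyOn
      (fun n z => secondKind μ r (P (n + 2)) z / secondKind μ r (P (n + 1)) z)
      (fun z => 1 / (2 * phi z)) atTop (msuppC μ)ᶜ)
    (hratio_cobounded : Tendsto
      (fun q : ℕ × ℂ => (P (q.1 + 2)).eval q.2 / (P (q.1 + 1)).eval q.2)
      (atTop ×ˢ Bornology.cobounded ℂ) (Bornology.cobounded ℂ)) :
    HasRatioAsymptotics μ r P where
  continuousOn_weight := hr
  eventually_normal := by
    rw [← map_add_atTop_eq_nat 1]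
    exact eventually_map.2 hnormal
  ratio z hz := (tendsto_prod_succ_iff
    (F := fun n z => (P (n + 1)).eval z / (P n).eval z)).1 (hratio z hz)
  ratio_secondKind z hz := (tendsto_prod_succ_iff
    (F := fun n z => secondKind μ r (P (n + 1)) z / secondKind μ r (P n) z)).1
      (hratio_secondKind z hz)
  ratio_cobounded := (tendsto_prod_succ_iff
    (F := fun n z => (P (n + 1)).eval z / (P n).eval z)).1 hratio_cobounded

theorem eventually_succ_normal (hP : HasRatioAsymptotics μ r P) :
    ∀ᶠ n in atTop, IsNormalOrthogonal μ r n (P n) ∧ IsNormalOrthogonal μ r (n + 1) (P (n + 1)) :=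
  hP.eventually_normal.and ((tendsto_add_atTop_nat 1).eventually hP.eventually_normal)

theorem continuousOn_div_weight {d : ℂ} (hP : HasRatioAsymptotics μ r P) (hd : d ∉ msuppC μ) :
    ContinuousOn (fun x : ℝ => r x / (x - d)) (msupp μ) :=
  hP.continuousOn_weight.div (by fun_prop) fun x hx => sub_ne_zero.2 fun h => hd ⟨x, hx, h⟩

theorem ratio_cobounded_geronimus {d : ℂ} (hP : HasRatioAsymptotics μ r P)
    (hd : d ∉ msuppC μ) :
    Tendsto (fun q : ℕ × ℂ => (geronimus μ r d (P (q.1 + 1)) (P (q.1 + 2))).eval q.2 /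
      (geronimus μ r d (P q.1) (P (q.1 + 1))).eval q.2)
      (atTop ×ˢ Bornology.cobounded ℂ) (Bornology.cobounded ℂ) :=
  tendsto_ratio_cobounded_of_eq_sub_mul (A := fun n z => (P n).eval z)
    (B := fun n z => (geronimus μ r d (P n) (P (n + 1))).eval z)
    (κ := fun n => secondKind μ r (P (n + 1)) d / secondKind μ r (P n) d) hP.ratio_cobounded
    (hP.ratio_secondKind.tendsto_at hd) (.of_forall fun _ _ => eval_geronimus μ r d _ _ _)

section

variable {c d : ℂ} (hP : HasRatioAsymptotics μ r P) (hcut : realCut ⊆ msuppC μ)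
include hP hcut

theorem eventually_eval_ne_zero (hc : c ∉ msuppC μ) : ∀ᶠ n in atTop, (P n).eval c ≠ 0 :=
  ((hP.ratio.tendsto_at hc).eventually_ne
    (phi_div_two_ne_zero fun h => hc (hcut h))).mono
      fun _ hn => (div_ne_zero_iff.1 hn).2

theorem eventually_secondKind_ne_zero (hd : d ∉ msuppC μ) :
    ∀ᶠ n in atTop, secondKind μ r (P n) d ≠ 0 :=
  ((hP.ratio_secondKind.tendsto_at hd).eventually_ne
    (one_div_two_mul_phi_ne_zero fun h => hd (hcut h))).mono
      fun _ hn => (div_ne_zero_iff.1 hn).2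

theorem ratio_cobounded_christoffel (hc : c ∉ msuppC μ) :
    Tendsto (fun q : ℕ × ℂ => (christoffel c (P (q.1 + 1)) (P (q.1 + 2))).eval q.2 /
      (christoffel c (P q.1) (P (q.1 + 1))).eval q.2)
      (atTop ×ˢ Bornology.cobounded ℂ) (Bornology.cobounded ℂ) := by
  have h := tendsto_ratio_cobounded_of_eq_sub_mul (A := fun n z => (P n).eval z)
    (B := fun n z => (z - c) * (christoffel c (P n) (P (n + 1))).eval z)
    (κ := fun n => (P (n + 1)).eval c / (P n).eval c) hP.ratio_cobounded (hP.ratio.tendsto_at hc)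
    ((hP.eventually_eval_ne_zero hcut hc).mono fun n hn => sub_mul_eval_christoffel hn _)
  refine h.congr' ?_
  filter_upwards [tendsto_snd.eventually (Bornology.eventually_ne_cobounded c)] with q hq
  exact mul_div_mul_left _ _ (sub_ne_zero.2 hq)

theorem ratio_geronimus (hd : d ∉ msuppC μ) : TendstoContinuouslyOn
      (fun n z => (geronimus μ r d (P (n + 1)) (P (n + 2))).eval z /
        (geronimus μ r d (P n) (P (n + 1))).eval z) (fun z => phi z / 2) atTop (msuppC μ)ᶜ :=
  hP.ratio.ratio_of_eq_sub_mul (A := fun n z => (P n).eval z)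
    (B := fun n z => (geronimus μ r d (P n) (P (n + 1))).eval z)
    (κ := fun n => secondKind μ r (P (n + 1)) d / secondKind μ r (P n) d)
    (fun _ hz => phi_div_two_ne_zero fun h => hz (hcut h)) (hP.ratio_secondKind.tendsto_at hd)
    (fun _ hz => phi_div_two_ne_one_div_two_mul_phi (fun h => hz (hcut h)) fun h => hd (hcut h))
    (.of_forall fun _ _ _ => eval_geronimus μ r d _ _ _)

theorem ratio_christoffel (hc : c ∉ msuppC μ) : TendstoContinuouslyOn
      (fun n z => (christoffel c (P (n + 1)) (P (n + 2))).eval z /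
        (christoffel c (P n) (P (n + 1))).eval z) (fun z => phi z / 2) atTop (msuppC μ)ᶜ :=
  hP.ratio.ratio_of_sub_mul_eq (A := fun n z => (P n).eval z)
    (B := fun n z => (christoffel c (P n) (P (n + 1))).eval z)
    (κ := fun n => (P (n + 1)).eval c / (P n).eval c) (isOpen_compl_msuppC μ)
    (fun _ hz => phi_div_two_ne_zero fun h => hz (hcut h))
    (fun _ => (P _).differentiableOn)
    (fun _ => (christoffel c (P _) (P _)).differentiableOn) hc
    (fun _ hz => dslope_phi_div_two_ne_zero (fun h => hc (hcut h)) fun h => hz (hcut h))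
    ((hP.eventually_eval_ne_zero hcut hc).mono fun _ hn _ _ => sub_mul_eval_christoffel hn _ _)

variable [IsFiniteMeasureOnCompacts μ] (hμ : IsCompact (msupp μ))
include hμ

theorem ratio_secondKind_christoffel (hc : c ∉ msuppC μ) : TendstoContinuouslyOn
      (fun n z => secondKind μ (fun x => (x - c) * r x) (christoffel c (P (n + 1)) (P (n + 2))) z /
        secondKind μ (fun x => (x - c) * r x) (christoffel c (P n) (P (n + 1))) z)
      (fun z => 1 / (2 * phi z)) atTop (msuppC μ)ᶜ :=
  hP.ratio_secondKind.ratio_of_eq_sub_mul (A := fun n => secondKind μ r (P n))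
    (B := fun n => secondKind μ (fun x => (x - c) * r x) (christoffel c (P n) (P (n + 1))))
    (κ := fun n => (P (n + 1)).eval c / (P n).eval c)
    (fun _ hz => one_div_two_mul_phi_ne_zero fun h => hz (hcut h)) (hP.ratio.tendsto_at hc)
    (fun _ hz => (phi_div_two_ne_one_div_two_mul_phi (fun h => hc (hcut h))
      fun h => hz (hcut h)).symm)
    ((hP.eventually_eval_ne_zero hcut hc).mono fun _ hn _ hz =>
      secondKind_christoffel hμ hP.continuousOn_weight hn _ hz)

theorem ratio_secondKind_geronimus (hd : d ∉ msuppC μ) : TendstoContinuouslyOn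
      (fun n z =>
        secondKind μ (fun x => r x / (x - d)) (geronimus μ r d (P (n + 1)) (P (n + 2))) z /
        secondKind μ (fun x => r x / (x - d)) (geronimus μ r d (P n) (P (n + 1))) z)
      (fun z => 1 / (2 * phi z)) atTop (msuppC μ)ᶜ :=
  hP.ratio_secondKind.ratio_of_sub_mul_eq (A := fun n => secondKind μ r (P n))
    (B := fun n => secondKind μ (fun x => r x / (x - d)) (geronimus μ r d (P n) (P (n + 1))))
    (κ := fun n => secondKind μ r (P (n + 1)) d / secondKind μ r (P n) d) (isOpen_compl_msuppC μ)
    (fun _ hz => one_div_two_mul_phi_ne_zero fun h => hz (hcut h))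
    (fun _ _ hz =>
      (differentiableAt_secondKind hμ hP.continuousOn_weight _ hz).differentiableWithinAt)
    (fun _ _ hz => (differentiableAt_secondKind hμ (hP.continuousOn_div_weight hd) _
      hz).differentiableWithinAt) hd
    (fun _ hz => dslope_one_div_two_mul_phi_ne_zero (fun h => hd (hcut h)) fun h => hz (hcut h))
    ((hP.eventually_secondKind_ne_zero hcut hd).mono fun _ hn _ hz =>
      sub_mul_secondKind_geronimus hμ hP.continuousOn_weight hd hn _ hz)

theorem sub_mul_weight (hc : c ∉ msuppC μ) :
    HasRatioAsymptotics μ (fun x => (x - c) * r x)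
      (fun n => christoffel c (P n) (P (n + 1))) where
  continuousOn_weight := .mul (by fun_prop) hP.continuousOn_weight
  eventually_normal := by
    filter_upwards [hP.eventually_succ_normal, hP.eventually_eval_ne_zero hcut hc] with n hn hnc
    exact hn.1.christoffel hn.2 hμ hP.continuousOn_weight hnc
  ratio := hP.ratio_christoffel hcut hc
  ratio_secondKind := hP.ratio_secondKind_christoffel hcut hμ hc
  ratio_cobounded := hP.ratio_cobounded_christoffel hcut hc

theorem div_sub_weight (hd : d ∉ msuppC μ) :
    HasRatioAsymptotics μ (fun x => r x / (x - d)) (fun n => geronimus μ r d (P (n - 1)) (P n)) :=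
  of_succ (hP.continuousOn_div_weight hd)
    ((hP.eventually_succ_normal.and (hP.eventually_secondKind_ne_zero hcut hd)).mono
      fun _ hn => hn.1.1.geronimus hn.1.2 hμ hP.continuousOn_weight hd hn.2)
    (hP.ratio_geronimus hcut hd) (hP.ratio_secondKind_geronimus hcut hμ hd)
    (hP.ratio_cobounded_geronimus hd)

end

end HasRatioAsymptotics

theorem prod_pow_mul_induction {ι M : Type*} [CommMonoid M] {G : M → Prop} {s : Finset ι}
    {f : ι → M} (hf : ∀ i ∈ s, ∀ m, G m → G (f i * m)) (k : ι → ℕ) {m : M} (hm : G m) :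
    G ((∏ i ∈ s, f i ^ k i) * m) := by
  let S : Submonoid M :=
    { carrier := {u | ∀ m, G m → G (u * m)}
      one_mem' := fun m hm => by rwa [one_mul]
      mul_mem' := fun hu hv m hm => by rw [mul_assoc]; exact hu _ (hv m hm) }
  exact S.prod_mem (fun i hi => S.pow_mem (hf i hi) (k i)) m hm

theorem HasRatioAsymptotics.exists_ratFn [IsFiniteMeasureOnCompacts μ]
    (hP : HasRatioAsymptotics μ (fun _ => 1) P) (hcut : realCut ⊆ msuppC μ)
    (hμ : IsCompact (msupp μ)) {h ℓ : ℕ} {c : Fin h → ℂ} {d : Fin ℓ → ℂ}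
    (hc : ∀ i, c i ∉ msuppC μ) (hd : ∀ j, d j ∉ msuppC μ) (A : Fin h → ℕ) (B : Fin ℓ → ℕ) :
    ∃ P' : ℕ → ℂ[X], HasRatioAsymptotics μ (ratFn c d A B) P' := by
  have hmul : ∀ i ∈ Finset.univ, ∀ r : ℝ → ℂ, (∃ P, HasRatioAsymptotics μ r P) →
      ∃ P, HasRatioAsymptotics μ ((fun x : ℝ => x - c i) * r) P :=
    fun i _ r ⟨P, hP⟩ => ⟨_, hP.sub_mul_weight hcut hμ (hc i)⟩
  have hdiv : ∀ j ∈ Finset.univ, ∀ r : ℝ → ℂ, (∃ P, HasRatioAsymptotics μ r P) →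
      ∃ P, HasRatioAsymptotics μ ((fun x : ℝ => (x - d j : ℂ)⁻¹) * r) P :=
    fun j _ r ⟨P, hP⟩ => ⟨_, by
      simpa only [div_eq_inv_mul, Pi.mul_def] using hP.div_sub_weight hcut hμ (hd j)⟩
  have hratFn : ratFn c d A B = (∏ j, (fun x : ℝ => (x - d j : ℂ)⁻¹) ^ B j) *
      ((∏ i, (fun x : ℝ => (x - c i : ℂ)) ^ A i) * fun _ => 1) := by
    ext x
    simp [ratFn, div_eq_inv_mul]
  rw [hratFn]
  exact prod_pow_mul_induction hdiv B (prod_pow_mul_induction hmul A ⟨P, hP⟩)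

end RatioAsymptotics

/-! ### Ratio asymptotics for the class `M(0,1)` -/

section BaseCase

variable {μ : Measure ℝ} [IsFiniteMeasureOnCompacts μ] {l : ℕ → ℝ[X]} {a b : ℕ → ℝ}

theorem IsOrthonormalPolys.greenFunction_eq_leadingCoeff_mul (hl : IsOrthonormalPolys μ l)
    (hμ : IsCompact (msupp μ)) {m n : ℕ} (hmn : m ≤ n) {z : ℂ} (hz : z ∉ msuppC μ) :
    greenFunction μ l m n z = (l m).leadingCoeff * (l n).leadingCoeff *
      ((monicOrthogonal l m).eval z * secondKind μ (fun _ => 1) (monicOrthogonal l n) z) := by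
  have hmonic : secondKind μ (fun _ => 1) (monicOrthogonal l n) z =
      ((l n).leadingCoeff : ℂ)⁻¹ * secondKind μ (fun _ => 1) (complexify (l n)) z :=
    secondKind_C_mul _ _ _
  have hτ := hl.leadingCoeff_ne_zero n
  rw [hl.greenFunction_eq_eval_mul_secondKind hμ hmn hz,
    ← hl.leadingCoeff_mul_eval_monicOrthogonal, hmonic]
  field_simp

namespace IsM01

variable (hM : IsM01 μ l a b) (hμ : IsCompact (msupp μ))
include hM hμ

theorem monicOrthogonal_ratio_eq (n : ℕ) {z : ℂ} (hz : z ∉ msuppC μ)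
    (hG : greenFunction μ l n (n + 1) z ≠ 0) :
    a (n + 1) * (greenFunction μ l (n + 1) (n + 1) z / greenFunction μ l n (n + 1) z) =
      (monicOrthogonal l (n + 1)).eval z / (monicOrthogonal l n).eval z := by
  have hτ := hM.leadingCoeff_eq_ofReal n
  have hτn := hM.onp.leadingCoeff_ne_zero n
  rw [hM.onp.greenFunction_eq_leadingCoeff_mul hμ (n.le_add_right 1) hz] at hG ⊢
  rw [hM.onp.greenFunction_eq_leadingCoeff_mul hμ le_rfl hz]
  rw [hτ] at hτn hG ⊢
  simp only [mul_ne_zero_iff] at hτn hG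
  obtain ⟨ha, hτ1⟩ := hτn
  obtain ⟨-, hp, hs⟩ := hG
  field_simp

theorem secondKind_ratio_eq (n : ℕ) {z : ℂ} (hz : z ∉ msuppC μ)
    (hG : greenFunction μ l n n z ≠ 0) :
    a (n + 1) * (greenFunction μ l n (n + 1) z / greenFunction μ l n n z) =
      secondKind μ (fun _ => 1) (monicOrthogonal l (n + 1)) z /
        secondKind μ (fun _ => 1) (monicOrthogonal l n) z := by
  have hτ := hM.leadingCoeff_eq_ofReal n
  have hτn := hM.onp.leadingCoeff_ne_zero n
  rw [hM.onp.greenFunction_eq_leadingCoeff_mul hμ le_rfl hz] at hG ⊢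
  rw [hM.onp.greenFunction_eq_leadingCoeff_mul hμ (n.le_add_right 1) hz]
  rw [hτ] at hτn hG ⊢
  simp only [mul_ne_zero_iff] at hτn hG
  obtain ⟨ha, hτ1⟩ := hτn
  obtain ⟨-, hp, hs⟩ := hG
  field_simp

theorem hasRatioAsymptotics : HasRatioAsymptotics μ (fun _ => 1) (monicOrthogonal l) := by
  have ha : TendstoContinuouslyOn (fun n (_ : ℂ) => (a (n + 1) : ℂ)) (fun _ => 1 / 2) atTop
      (msuppC μ)ᶜ := by
    refine .of_tendsto ?_ _
    simpa [Function.comp_def] using (Complex.continuous_ofReal.tendsto _).comp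
      (hM.tendsto_a.comp (tendsto_add_atTop_nat 1))
  have hφ : ∀ z ∈ (msuppC μ)ᶜ, phi z ≠ 0 := fun z hz => phi_ne_zero (hM.notMem_realCut hμ hz)
  have hs : ∀ z ∈ (msuppC μ)ᶜ, sqrtB z ≠ 0 := fun z hz =>
    sqrtB_ne_zero (hM.notMem_realCut hμ hz)
  have hG := hM.tendstoContinuouslyOn_greenFunction_self hμ
  have hG' := hM.tendstoContinuouslyOn_greenFunction_succ hμ
  have hG0 : ∀ z ∈ (msuppC μ)ᶜ, 1 / sqrtB z ≠ 0 := fun z hz => one_div_ne_zero (hs z hz)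
  have hG0' : ∀ z ∈ (msuppC μ)ᶜ, 1 / (phi z * sqrtB z) ≠ 0 := fun z hz =>
    one_div_ne_zero (mul_ne_zero (hφ z hz) (hs z hz))
  refine ⟨continuousOn_const, .of_forall fun n => hM.onp.isNormalOrthogonal_monicOrthogonal hμ n,
    ?_, ?_, hM.tendsto_monicOrthogonal_ratio_cobounded⟩
  · refine ((ha.mul ((hG.comp_tendsto (tendsto_add_atTop_nat 1)).div hG' hG0')).congr'
      fun z hz => ?_).congr_limit fun z hz => ?_
    · filter_upwards [hG'.eventually_ne hz (hG0' z hz), tendsto_snd.eventually self_mem_nhdsWithin]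
        with q hq hqz
      exact hM.monicOrthogonal_ratio_eq hμ q.1 hqz hq
    · have := hφ z hz
      have := hs z hz
      field_simp
  · refine ((ha.mul (hG'.div hG hG0)).congr' fun z hz => ?_).congr_limit fun z hz => ?_
    · filter_upwards [hG.eventually_ne hz (hG0 z hz), tendsto_snd.eventually self_mem_nhdsWithin]
        with q hq hqz
      exact hM.secondKind_ratio_eq hμ q.1 hqz hq
    · have := hφ z hz
      have := hs z hz
      field_simp

end IsM01

end BaseCase

/-! ### Derivatives -/

section Conclusion

variable {μ : Measure ℝ} {r : ℝ → ℂ} {P : ℕ → ℂ[X]}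

namespace HasRatioAsymptotics

theorem congr_of_isQPoly [IsFiniteMeasureOnCompacts μ] {Q : ℕ → ℂ[X]}
    (hP : HasRatioAsymptotics μ r P) (hμ : IsCompact (msupp μ)) (hQ : ∀ n, IsQPoly μ r n (Q n)) :
    HasRatioAsymptotics μ r Q :=
  hP.congr (hP.eventually_normal.mono fun n hn =>
    (hn.eq_of_isQPoly hμ hP.continuousOn_weight (hQ n)).symm)

variable (hP : HasRatioAsymptotics μ r P) (hcut : realCut ⊆ msuppC μ)
include hP

theorem tendsto_inv_mul_iterate_derivative_div_cobounded (ν : ℕ) :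
    Tendsto (fun q : ℕ × ℂ => 1 / (q.1 : ℂ) *
      ((derivative^[ν + 1] (P q.1)).eval q.2 / (derivative^[ν] (P q.1)).eval q.2))
      (atTop ×ˢ Bornology.cobounded ℂ) (𝓝 0) := by
  have hdeg : ∀ᶠ n in atTop, (P n).natDegree = n :=
    hP.eventually_normal.mono fun _ hn => hn.natDegree_eq
  obtain ⟨R, hR⟩ := exists_eventually_norm_root_le_of_ratio_cobounded hP.ratio_cobounded
  simp only [Function.iterate_succ_apply']
  refine tendsto_inv_mul_derivative_div_cobounded (P := fun n => derivative^[ν] (P n)) (R := R)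
    (hdeg.mono fun n hn => ?_) (eventually_norm_root_iterate_derivative_le hdeg hR ν)
  rw [natDegree_iterate_derivative_eq, hn]
  exact n.sub_le ν

include hcut

theorem ratio_iterate_derivative (ν : ℕ) :
    TendstoContinuouslyOn
      (fun n z => (derivative^[ν] (P (n + 1))).eval z / (derivative^[ν] (P n)).eval z)
      (fun z => phi z / 2) atTop (msuppC μ)ᶜ := by
  refine tendstoContinuouslyOn_ratio_iterate_derivative (isOpen_compl_msuppC μ) hP.ratio
    (fun z hz => phi_div_two_ne_zero fun h => hz (hcut h)) (fun z hz => ?_) ν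
  have hzcut : z ∉ realCut := fun h => hz (hcut h)
  rw [logDeriv_phi_div_two hzcut]
  exact one_div_ne_zero (sqrtB_ne_zero hzcut)

theorem inv_mul_iterate_derivative_div (ν : ℕ) :
    TendstoContinuouslyOn (fun (n : ℕ) z => 1 / (n : ℂ) *
      ((derivative^[ν + 1] (P n)).eval z / (derivative^[ν] (P n)).eval z))
      (fun z => 1 / sqrtB z) atTop (msuppC μ)ᶜ := by
  have h := (hP.ratio_iterate_derivative hcut ν).inv_mul_logDeriv
    (F := fun n z => (derivative^[ν] (P n)).eval z) (isOpen_compl_msuppC μ)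
    (fun z hz => phi_div_two_ne_zero fun h => hz (hcut h))
    fun n => (derivative^[ν] (P n)).differentiableOn
  simp only [logDeriv_apply, Polynomial.deriv, ← Function.iterate_succ_apply'] at h
  exact h.congr_limit fun z hz => logDeriv_phi_div_two fun h => hz (hcut h)

end HasRatioAsymptotics

end Conclusion

/-- Theorem 1, formulas (3.3) and (3.4). For `μ ∈ M(0,1)` and
each fixed `ν ≥ 0`: `Q_{n+1}^{(ν)}/Q_n^{(ν)} ⇉ φ(z)/2` on compact subsets of
`ℂ ∖ S_μ` and `(1/n)·Q_n^{(ν+1)}/Q_n^{(ν)} ⇉ 1/√(z²-1)` on compact subsets of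
`ℂ̄ ∖ S_μ` (compact subsets of the sphere correspond to closed subsets of ℂ
avoiding S_μ). -/
theorem ratio_asymptotics_Q
    (μ : Measure ℝ) [IsFiniteMeasure μ] (l : ℕ → Polynomial ℝ) (a b : ℕ → ℝ)
    (hcompact : IsCompact (msupp μ)) (hinf : (msupp μ).Infinite)
    (hM01 : IsM01 μ l a b)
    (h ℓ : ℕ) (c : Fin h → ℂ) (d : Fin ℓ → ℂ) (A : Fin h → ℕ) (B : Fin ℓ → ℕ)
    (hA : ∀ i, 0 < A i) (hB : ∀ j, 0 < B j)
    (hc : ∀ i, c i ∉ msuppC μ) (hd : ∀ j, d j ∉ msuppC μ)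
    (hcd : ∀ i j, c i ≠ d j)
    (Q : ℕ → Polynomial ℂ) (hQ : ∀ n, IsQPoly μ (ratFn c d A B) n (Q n)) :
    ∀ ν : ℕ,
      (∀ K : Set ℂ, IsCompact K → K ⊆ (msuppC μ)ᶜ →
        TendstoUniformlyOn
          (fun (n : ℕ) (z : ℂ) =>
            (derivative^[ν] (Q (n + 1))).eval z / (derivative^[ν] (Q n)).eval z)
          (fun z => phi z / 2) atTop K) ∧
      (∀ F : Set ℂ, IsClosed F → F ⊆ (msuppC μ)ᶜ →
        TendstoUniformlyOn
          (fun (n : ℕ) (z : ℂ) =>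
            (1 / (n : ℂ)) *
              ((derivative^[ν + 1] (Q n)).eval z / (derivative^[ν] (Q n)).eval z))
          (fun z => 1 / sqrtB z) atTop F) := by
  have hcut : realCut ⊆ msuppC μ := hM01.realCut_subset_msuppC hcompact
  obtain ⟨P, hP⟩ := (hM01.hasRatioAsymptotics hcompact).exists_ratFn hcut hcompact hc hd A B
  have hQ' : HasRatioAsymptotics μ (ratFn c d A B) Q := hP.congr_of_isQPoly hcompact hQ
  refine fun ν => ⟨fun K hK hKμ => ?_, fun F hF hFμ => ?_⟩
  · exact (hQ'.ratio_iterate_derivative hcut ν).tendstoUniformlyOn_of_isCompact hK hKμ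
  · exact (hQ'.inv_mul_iterate_derivative_div hcut ν).tendstoUniformlyOn_of_isClosed
      (hQ'.tendsto_inv_mul_iterate_derivative_div_cobounded ν) tendsto_one_div_sqrtB_cobounded
      hF hFμ
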